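/- arXiv:2107.10736 — 4 statements merged into one kernel-verified Lean document; each statement's English description precedes it below -/
import Mathlib

section
/- There exists a constant C > 0 such that for every integer n ≥ 1, every t ∈ (−1,1], and every λ ∈ ℂ with (2n−1)² ≤ Re λ < (2n+1)², the sum over all k ∈ ℤ \ B(n) of 1/|λ − (2k+t)²| is finite and less than C, where B(n) = {n−1, −(n−1), n, −n, n+1, −(n+1)}. -/
open MeasureTheory Set Filter Topology Metric

open scoped Classical

noncomputable section

/-- The Bloch phase factor `e^{iπt}`. -/
def blochPhase (t : ℝ) : ℂ := Complex.exp (Complex.I * Real.pi * t)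

/-- `Ψ` is a Bloch function of `L_t(Q)` with Bloch eigenvalue `lam`:
nonzero, twice continuously differentiable, satisfies `-Ψ'' + QΨ = lam Ψ`
and `Ψ(x+π) = e^{iπt} Ψ(x)`. -/
def IsBlochPair {m : ℕ} (Q : ℝ → Matrix (Fin m) (Fin m) ℂ) (t : ℝ) (lam : ℂ)
    (Ψ : ℝ → Fin m → ℂ) : Prop :=
  Ψ ≠ 0 ∧ ContDiff ℝ 2 Ψ ∧
    (∀ x : ℝ, -(deriv (deriv Ψ) x) + (Q x).mulVec (Ψ x) = lam • Ψ x) ∧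
    (∀ x : ℝ, Ψ (x + Real.pi) = blochPhase t • Ψ x)

/-- `lam` is a Bloch eigenvalue of `L_t(Q)`. -/
def IsBlochEigenvalue {m : ℕ} (Q : ℝ → Matrix (Fin m) (Fin m) ℂ) (t : ℝ) (lam : ℂ) : Prop :=
  ∃ Ψ, IsBlochPair Q t lam Ψ

/-- `Ψ` is normalized: `∫₀^π |Ψ(x)|² dx = 1` (Euclidean norm on `ℂ^m`). -/
def IsNormalized {m : ℕ} (Ψ : ℝ → Fin m → ℂ) : Prop :=
  (∫ x in (0:ℝ)..Real.pi, ∑ i, ‖Ψ x i‖ ^ 2) = 1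

/-- The index set `A(k,t)`. -/
def Akt (k : ℤ) (t : ℝ) : Set ℤ :=
  if t ∈ Set.Ioo (-(2:ℝ)/3) (-(1:ℝ)/3) ∪ Set.Ioo ((1:ℝ)/3) ((2:ℝ)/3) then {k}
  else if t ∈ Set.Ioo (-(1:ℝ)/3) ((1:ℝ)/3) then {k, -k}
  else if t ∈ Set.Ioc ((2:ℝ)/3) 1 then {k, -k - 1}
  else if t ∈ Set.Ioo (-1 : ℝ) (-(2:ℝ)/3) then {k, -k + 1}
  else ∅

/-- The spectrum of `L(Q)`: the set of Bloch eigenvalues of `L_t(Q)` for some `t ∈ (-1,1]`. -/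
def SpecLQ {m : ℕ} (Q : ℝ → Matrix (Fin m) (Fin m) ℂ) : Set ℂ :=
  {lam | ∃ t ∈ Set.Ioc (-1:ℝ) 1, IsBlochEigenvalue Q t lam}

/-- The index set `B(n) = {n-1, -(n-1), n, -n, n+1, -(n+1)}`. -/
def Bset (n : ℤ) : Set ℤ := {n - 1, -(n - 1), n, -n, n + 1, -(n + 1)}

lemma aux_key (n : ℤ) (hn : 1 ≤ n) (t : ℝ) (ht : t ∈ Set.Ioc (-1:ℝ) 1) (lam : ℂ)
    (h1 : (2 * (n : ℝ) - 1) ^ 2 ≤ lam.re) (h2 : lam.re < (2 * (n : ℝ) + 1) ^ 2)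
    (k : ℤ) (hk : k ∉ Bset n) :
    1 / ‖lam - (((2 * (k : ℝ) + t) ^ 2 : ℝ) : ℂ)‖ ≤
      1 / (((k - n : ℤ) : ℝ)) ^ 2 + 1 / (((k + n : ℤ) : ℝ)) ^ 2 := by
  obtain ⟨ht1, ht2⟩ := ht
  have hre : |lam.re - (2 * (k : ℝ) + t) ^ 2| ≤ ‖lam - (((2 * (k : ℝ) + t) ^ 2 : ℝ) : ℂ)‖ := by
    have := Complex.abs_re_le_norm (lam - (((2 * (k : ℝ) + t) ^ 2 : ℝ) : ℂ))
    rwa [Complex.sub_re, Complex.ofReal_re] at this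
  have hnR : (1:ℝ) ≤ n := by exact_mod_cast hn
  -- main bound
  have main : ∀ a s : ℝ, 0 ≤ a → -1 ≤ s → s ≤ 1 → (a ≥ n + 2 ∨ a ≤ n - 2) →
      (a - n) ^ 2 ≤ |lam.re - (2 * a + s) ^ 2| := by
    intro a s ha hs1 hs2 h
    rcases h with h | h
    · rw [abs_sub_comm]
      refine le_trans ?_ (le_abs_self _)
      have : (2 * a - 1) ^ 2 ≤ (2 * a + s) ^ 2 := by
        apply pow_le_pow_left₀ <;> linarith
      nlinarith
    · refine le_trans ?_ (le_abs_self _)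
      have : (2 * a + s) ^ 2 ≤ (2 * a + 1) ^ 2 := by
        apply sq_le_sq'  <;> linarith
      nlinarith
  simp only [Bset, Set.mem_insert_iff, Set.mem_singleton_iff, not_or] at hk
  obtain ⟨k1, k2, k3, k4, k5, k6⟩ := hk
  rcases le_total 0 k with h0 | h0
  · have hd : k ≥ n + 2 ∨ k ≤ n - 2 := by omega
    have hd' : (k:ℝ) ≥ n + 2 ∨ (k:ℝ) ≤ n - 2 := by exact_mod_cast hd
    have hm := main k t (by exact_mod_cast h0) ht1.le ht2 hd'
    have hpos : (0:ℝ) < ((k:ℝ) - n) ^ 2 := by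
      refine sq_pos_iff.mpr ?_; rcases hd' with h | h <;> intro h' <;> linarith
    have := one_div_le_one_div_of_le hpos (hm.trans hre)
    rw [Int.cast_sub, Int.cast_add]
    have h3 : (0:ℝ) ≤ 1 / ((k:ℝ) + n) ^ 2 := by positivity
    linarith
  · have hd : -k ≥ n + 2 ∨ -k ≤ n - 2 := by omega
    have hd' : -(k:ℝ) ≥ n + 2 ∨ -(k:ℝ) ≤ n - 2 := by exact_mod_cast hd
    have hm := main (-k) (-t) (by have : (k:ℝ) ≤ 0 := by exact_mod_cast h0
                                  linarith) (by linarith) (by linarith) hd'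
    have e1 : (2 * -(k:ℝ) + -t) ^ 2 = (2 * (k:ℝ) + t) ^ 2 := by ring
    have e2 : (-(k:ℝ) - n) ^ 2 = ((k:ℝ) + n) ^ 2 := by ring
    rw [e1, e2] at hm
    have hpos : (0:ℝ) < ((k:ℝ) + n) ^ 2 := by
      refine sq_pos_iff.mpr ?_; rcases hd' with h | h <;> intro h' <;> linarith
    have := one_div_le_one_div_of_le hpos (hm.trans hre)
    rw [Int.cast_sub, Int.cast_add]
    have h3 : (0:ℝ) ≤ 1 / ((k:ℝ) - n) ^ 2 := by positivity
    linarith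

lemma aux_sum (P : ℤ → Prop) (f g : ℤ → ℝ) (hf : ∀ k, 0 ≤ f k) (hg : ∀ k, 0 ≤ g k)
    (hfg : ∀ k, P k → f k ≤ g k) (hs : Summable g) :
    Summable (fun k : {k : ℤ // P k} => f k) ∧ ∑' k : {k : ℤ // P k}, f k ≤ ∑' k, g k := by
  have s4 : Summable (fun k : {k : ℤ // P k} => g k) := hs.subtype {k : ℤ | P k}
  have s5 : Summable (fun k : {k : ℤ // P k} => f k) :=
    Summable.of_nonneg_of_le (fun k => hf k) (fun k => hfg k k.2) s4
  have b1 : ∑' k : {k : ℤ // P k}, f k ≤ ∑' k : {k : ℤ // P k}, g k :=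
    s5.tsum_le_tsum (fun k : {k : ℤ // P k} => hfg k k.2) s4
  exact ⟨s5, b1.trans (Summable.tsum_subtype_le g {k : ℤ | P k} hg hs)⟩

lemma aux_shift (n : ℤ) (g : ℤ → ℝ) (hg : Summable g) :
    Summable (fun k => g (k - n) + g (k + n)) ∧
      ∑' k, (g (k - n) + g (k + n)) = 2 * ∑' k, g k := by
  have s1 : Summable (fun k : ℤ => g (k - n)) := (Equiv.subRight n).summable_iff.mpr hg
  have s2 : Summable (fun k : ℤ => g (k + n)) := (Equiv.addRight n).summable_iff.mpr hg
  have t1 : ∑' k : ℤ, g (k - n) = ∑' j, g j := (Equiv.subRight n).tsum_eq g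
  have t2 : ∑' k : ℤ, g (k + n) = ∑' j, g j := (Equiv.addRight n).tsum_eq g
  refine ⟨s1.add s2, ?_⟩
  rw [s1.tsum_add s2, t1, t2, two_mul]

/-- there is a constant `C > 0` such that for all `n ≥ 1`, `t ∈ (-1,1]`,
and `λ ∈ ℂ` with `(2n-1)² ≤ Re λ < (2n+1)²`, the sum `∑_{k ∉ B(n)} 1/|λ - (2k+t)²|`
is finite and less than `C`. -/
theorem statement6 :
    ∃ C : ℝ, 0 < C ∧ ∀ n : ℤ, 1 ≤ n → ∀ t ∈ Set.Ioc (-1:ℝ) 1, ∀ lam : ℂ,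
      (2 * (n : ℝ) - 1) ^ 2 ≤ lam.re → lam.re < (2 * (n : ℝ) + 1) ^ 2 →
      Summable (fun k : {k : ℤ // k ∉ Bset n} =>
        1 / ‖lam - (((2 * ((k : ℤ) : ℝ) + t) ^ 2 : ℝ) : ℂ)‖) ∧
      (∑' k : {k : ℤ // k ∉ Bset n},
        1 / ‖lam - (((2 * ((k : ℤ) : ℝ) + t) ^ 2 : ℝ) : ℂ)‖) < C := by
  have hg : Summable (fun j : ℤ => 1 / (j : ℝ) ^ 2) :=
    Real.summable_one_div_int_pow.mpr (by norm_num)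
  have hg0 : 0 ≤ ∑' j : ℤ, 1 / (j : ℝ) ^ 2 := tsum_nonneg fun j => by positivity
  refine ⟨2 * (∑' j : ℤ, 1 / (j : ℝ) ^ 2) + 1, by linarith, ?_⟩
  intro n hn t ht lam h1 h2
  obtain ⟨s3, t3⟩ := aux_shift n (fun j : ℤ => 1 / (j : ℝ) ^ 2) hg
  obtain ⟨a, b⟩ := aux_sum (fun k => k ∉ Bset n)
    (fun k => 1 / ‖lam - (((2 * (k : ℝ) + t) ^ 2 : ℝ) : ℂ)‖) _
    (fun k => one_div_nonneg.mpr (norm_nonneg _))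
    (fun k => add_nonneg (one_div_nonneg.mpr (sq_nonneg _)) (one_div_nonneg.mpr (sq_nonneg _)))
    (fun k hk => aux_key n hn t ht lam h1 h2 k hk) s3
  rw [t3] at b
  exact ⟨a, lt_of_le_of_lt b (lt_add_one _)⟩
end
end

section
/- There exists a constant M > 0 such that for every t ∈ (−1,1], every Bloch eigenvalue λ of L_t(Q), and every normalized Bloch function Ψ corresponding to λ, one has sup_{x ∈ [0,π]} |Ψ(x)| < M. -/
open MeasureTheory Set Filter Topology Metric

open scoped Classical

noncomputable section

lemma bloch_abstract {H : Type*} [NormedAddCommGroup H] [InnerProductSpace ℂ H]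
    (f f1 f2 F : ℝ → H) (lam c : ℂ) (K : ℝ) (hK : 0 ≤ K)
    (h1 : ∀ x, HasDerivAt f (f1 x) x) (h2 : ∀ x, HasDerivAt f1 (f2 x) x)
    (hc2 : Continuous f2) (hF : Continuous F)
    (heq : ∀ x, f2 x = F x - lam • f x)
    (hFK : ∀ x ∈ Set.Icc (0:ℝ) Real.pi, ‖F x‖ ≤ K * ‖f x‖)
    (hc : ‖c‖ = 1) (hb : f Real.pi = c • f 0) (hb1 : f1 Real.pi = c • f1 0)
    (hn : ∫ x in (0:ℝ)..Real.pi, ‖f x‖ ^ 2 = 1) :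
    ∀ x ∈ Set.Icc (0:ℝ) Real.pi, ‖f x‖ ^ 2 ≤ 2 * (1 + (3 * K + 1)) := by
  have cf : Continuous f := continuous_iff_continuousAt.2 fun x => (h1 x).continuousAt
  have cf1 : Continuous f1 := continuous_iff_continuousAt.2 fun x => (h2 x).continuousAt
  have hpi := Real.pi_pos
  have cfn : Continuous fun x => ‖f x‖ ^ 2 := cf.norm.pow 2
  have cf1n : Continuous fun x => ‖f1 x‖ ^ 2 := cf1.norm.pow 2
  have cfm : ∀ b : ℝ, Continuous fun x => b * ‖f x‖ ^ 2 := fun b => continuous_const.mul cfn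
  set P : ℝ := ∫ x in (0:ℝ)..Real.pi, ‖f1 x‖ ^ 2 with hP
  have hP0 : 0 ≤ P := intervalIntegral.integral_nonneg hpi.le fun x _ => by positivity
  set q : ℂ := ∫ x in (0:ℝ)..Real.pi, inner ℂ (f x) (F x) with hq
  have cq : Continuous fun x => inner ℂ (f x) (F x) := cf.inner hF
  have hqK : ‖q‖ ≤ K := by
    calc ‖q‖ ≤ ∫ x in (0:ℝ)..Real.pi, ‖inner ℂ (f x) (F x)‖ :=
          intervalIntegral.norm_integral_le_integral_norm hpi.le
      _ ≤ ∫ x in (0:ℝ)..Real.pi, K * ‖f x‖ ^ 2 := by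
          apply intervalIntegral.integral_mono_on hpi.le
            (cq.norm.intervalIntegrable _ _)
            ((cfm K).intervalIntegrable _ _)
          intro x hx
          have := hFK x hx
          have h3 := norm_inner_le_norm (𝕜 := ℂ) (f x) (F x)
          nlinarith [norm_nonneg (f x)]
      _ = K := by rw [intervalIntegral.integral_const_mul, hn, mul_one]
  have hlam : lam = q + P := by
    have key : ∫ x in (0:ℝ)..Real.pi, (inner ℂ (f x) (f2 x) + inner ℂ (f1 x) (f1 x)) =
        inner ℂ (f Real.pi) (f1 Real.pi) - inner ℂ (f 0) (f1 0) := by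
      apply intervalIntegral.integral_eq_sub_of_hasDerivAt
        (f := fun x => inner ℂ (f x) (f1 x))
      · intro x _
        exact (h1 x).inner ℂ (h2 x)
      · exact ((cf.inner hc2).add (cf1.inner cf1)).intervalIntegrable _ _
    have hz : (inner ℂ (f Real.pi) (f1 Real.pi) : ℂ) - inner ℂ (f 0) (f1 0) = 0 := by
      rw [hb, hb1, inner_smul_left, inner_smul_right, ← mul_assoc, Complex.conj_mul', hc]
      simp
    have e : ∀ x, (inner ℂ (f x) (f2 x) + inner ℂ (f1 x) (f1 x) : ℂ) =
        inner ℂ (f x) (F x) - lam * ((‖f x‖ ^ 2 : ℝ) : ℂ) + ((‖f1 x‖ ^ 2 : ℝ) : ℂ) := by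
      intro x
      rw [heq, inner_sub_right, inner_smul_right, inner_self_eq_norm_sq_to_K,
        inner_self_eq_norm_sq_to_K]
      push_cast
      rfl
    have c1 : Continuous fun x => lam * ((‖f x‖ ^ 2 : ℝ) : ℂ) :=
      continuous_const.mul (Complex.continuous_ofReal.comp (cf.norm.pow 2))
    have c2 : Continuous fun x => ((‖f1 x‖ ^ 2 : ℝ) : ℂ) :=
      (Complex.continuous_ofReal.comp (cf1.norm.pow 2))
    have c3 : Continuous fun x => inner ℂ (f x) (F x) - lam * ((‖f x‖ ^ 2 : ℝ) : ℂ) := cq.sub c1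
    rw [hz, intervalIntegral.integral_congr (fun x _ => e x),
      intervalIntegral.integral_add (c3.intervalIntegrable _ _)
        (c2.intervalIntegrable _ _),
      intervalIntegral.integral_sub (cq.intervalIntegrable _ _) (c1.intervalIntegrable _ _),
      intervalIntegral.integral_const_mul, intervalIntegral.integral_ofReal,
      intervalIntegral.integral_ofReal, hn] at key
    simp only [Complex.ofReal_one, mul_one] at key
    rw [← hq, ← hP] at key
    linear_combination -key
  set a : ℝ := lam.re + K + 1 with ha
  have hre : lam.re = q.re + P := by rw [hlam]; simp
  have him : lam.im = q.im := by rw [hlam]; simp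
  have hqre := abs_le.1 ((Complex.abs_re_le_norm q).trans hqK)
  have hqim := (Complex.abs_im_le_norm q).trans hqK
  have ha1 : 1 ≤ a := by linarith [hqre.1]
  set B : ℝ := 3 * K + 1 with hB
  have hal : ‖(a : ℂ) - lam‖ ≤ 2 * K + 1 := by
    refine (Complex.norm_le_abs_re_add_abs_im _).trans ?_
    have r1 : ((a : ℂ) - lam).re = K + 1 := by simp [ha]; ring
    have r2 : ((a : ℂ) - lam).im = - q.im := by simp [him]
    rw [r1, r2, abs_neg, abs_of_nonneg (by linarith)]
    linarith
  set E : ℝ → ℝ := fun x => ‖f1 x‖ ^ 2 + a * ‖f x‖ ^ 2 with hE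
  have cE : Continuous E := (cf1.norm.pow 2).add (continuous_const.mul (cf.norm.pow 2))
  have nsq : ∀ v : H, (inner ℂ v v : ℂ).re = ‖v‖ ^ 2 := fun v => by
    rw [inner_self_eq_norm_sq_to_K]; norm_cast
  have hsym : ∀ v w : H, (inner ℂ v w : ℂ).re = (inner ℂ w v : ℂ).re := fun v w => by
    rw [← inner_conj_symm, Complex.conj_re]
  have dn : ∀ (g g' : ℝ → H), (∀ x, HasDerivAt g (g' x) x) →
      ∀ x, HasDerivAt (fun y => ‖g y‖ ^ 2) (2 * (inner ℂ (g x) (g' x) : ℂ).re) x := by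
    intro g g' hg x
    have := Complex.reCLM.hasFDerivAt.comp_hasDerivAt x ((hg x).inner ℂ (hg x))
    have e1 : (fun y => ‖g y‖ ^ 2) = Complex.reCLM ∘ fun t => inner ℂ (g t) (g t) := by
      funext y
      exact (nsq (g y)).symm
    have e2 : 2 * (inner ℂ (g x) (g' x) : ℂ).re =
        Complex.reCLM (inner ℂ (g x) (g' x) + inner ℂ (g' x) (g x)) := by
      rw [Complex.reCLM_apply, Complex.add_re, hsym (g' x)]; ring
    rw [e1, e2]
    exact this
  set E' : ℝ → ℝ := fun x => 2 * (inner ℂ (f1 x) (f2 x) : ℂ).re +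
    a * (2 * (inner ℂ (f x) (f1 x) : ℂ).re) with hE'
  have dE : ∀ x, HasDerivAt E (E' x) x := fun x =>
    (dn f1 f2 h2 x).add ((dn f f1 h1 x).const_mul a)
  have cE' : Continuous E' :=
    (continuous_const.mul (Complex.continuous_re.comp (cf1.inner hc2))).add
    (continuous_const.mul (continuous_const.mul (Complex.continuous_re.comp (cf.inner cf1))))
  have hE0 : ∀ x, 0 ≤ E x := fun x => by simp only [hE]; positivity
  have bE : ∀ x ∈ Set.Icc (0:ℝ) Real.pi, |E' x| ≤ B * E x := by
    intro x hx
    have e1 : E' x = 2 * (inner ℂ (f1 x) (F x + ((a : ℂ) - lam) • f x) : ℂ).re := by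
      simp only [hE']
      rw [hsym (f x) (f1 x), heq, inner_sub_right, inner_add_right, sub_smul, inner_sub_right,
        inner_smul_right (f1 x) (f x) (a : ℂ)]
      simp only [Complex.add_re, Complex.sub_re, Complex.re_ofReal_mul]
      ring
    have e2 : ‖F x + ((a : ℂ) - lam) • f x‖ ≤ B * ‖f x‖ := by
      refine (norm_add_le _ _).trans ?_
      rw [norm_smul]
      have := hFK x hx
      nlinarith [norm_nonneg (f x)]
    have e3 := (Complex.abs_re_le_norm _).trans
      (norm_inner_le_norm (𝕜 := ℂ) (f1 x) (F x + ((a : ℂ) - lam) • f x))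
    have e4 : |E' x| ≤ 2 * (‖f1 x‖ * (B * ‖f x‖)) := by
      rw [e1, abs_mul, abs_two]
      have := mul_le_mul_of_nonneg_left e2 (norm_nonneg (f1 x))
      linarith
    refine e4.trans ?_
    have hB0 : 0 ≤ B := by positivity
    have : 2 * (‖f1 x‖ * ‖f x‖) ≤ E x := by
      simp only [hE]
      nlinarith [sq_nonneg (‖f1 x‖ - ‖f x‖), sq_nonneg (‖f x‖)]
    nlinarith
  have IE : ∫ x in (0:ℝ)..Real.pi, E x ≤ 2 * a := by
    simp only [hE]
    rw [intervalIntegral.integral_add (cf1n.intervalIntegrable _ _)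
      ((cfm a).intervalIntegrable _ _),
      intervalIntegral.integral_const_mul, hn, ← hP]
    linarith [hqre.1]
  obtain ⟨y, hy, hymin⟩ := isCompact_Icc.exists_isMinOn
    (Set.nonempty_Icc.2 hpi.le) cE.continuousOn
  have hEy : E y ≤ 2 * a := by
    have : ∫ x in (0:ℝ)..Real.pi, E y ≤ ∫ x in (0:ℝ)..Real.pi, E x :=
      intervalIntegral.integral_mono_on hpi.le (by simp)
        (cE.intervalIntegrable _ _) (fun x hx => hymin hx)
    simp only [intervalIntegral.integral_const, sub_zero, smul_eq_mul] at this
    nlinarith [hE0 y, Real.pi_gt_three]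
  intro x hx
  have hEx : E x - E y ≤ B * (2 * a) := by
    rw [← intervalIntegral.integral_eq_sub_of_hasDerivAt (fun z _ => dE z)
      (cE'.intervalIntegrable y x)]
    have s : Set.uIoc y x ⊆ Set.Ioc 0 Real.pi := by
      intro z hz
      rw [Set.mem_uIoc] at hz
      rcases hz with hz | hz
      · exact ⟨lt_of_le_of_lt hy.1 hz.1, hz.2.trans hx.2⟩
      · exact ⟨lt_of_le_of_lt hx.1 hz.1, hz.2.trans hy.2⟩
    have iO : IntegrableOn (fun z => ‖E' z‖) (Set.Ioc 0 Real.pi) :=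
      (intervalIntegrable_iff_integrableOn_Ioc_of_le hpi.le).1 (cE'.norm.intervalIntegrable _ _)
    calc ∫ z in y..x, E' z ≤ ‖∫ z in y..x, E' z‖ := le_abs_self _
      _ ≤ ∫ z in Set.uIoc y x, ‖E' z‖ := intervalIntegral.norm_integral_le_integral_norm_uIoc
      _ ≤ ∫ z in Set.Ioc 0 Real.pi, ‖E' z‖ :=
        setIntegral_mono_set iO (Eventually.of_forall fun z => norm_nonneg _)
          s.eventuallyLE
      _ = ∫ z in (0:ℝ)..Real.pi, ‖E' z‖ := (intervalIntegral.integral_of_le hpi.le).symm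
      _ ≤ ∫ z in (0:ℝ)..Real.pi, B * E z :=
        intervalIntegral.integral_mono_on hpi.le (cE'.norm.intervalIntegrable _ _)
          ((continuous_const.mul cE).intervalIntegrable _ _) bE
      _ ≤ B * (2 * a) := by
        rw [intervalIntegral.integral_const_mul]
        exact mul_le_mul_of_nonneg_left IE (by positivity)
  have h5 : a * ‖f x‖ ^ 2 ≤ E x := by simp only [hE]; nlinarith [sq_nonneg ‖f1 x‖]
  have h6 : a * ‖f x‖ ^ 2 ≤ a * (2 * (1 + B)) := by linarith
  exact le_of_mul_le_mul_left h6 (by linarith)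

/-- there is a constant `M > 0` bounding, uniformly over `t ∈ (-1,1]`,
all normalized Bloch functions on `[0,π]` in the Euclidean norm. -/
theorem statement7 {m : ℕ} (hm : 1 ≤ m) (Q : ℝ → Matrix (Fin m) (Fin m) ℂ)
    (hQcont : Continuous Q)
    (hQper : ∀ x : ℝ, Q (x + Real.pi) = Q x) :
    ∃ M : ℝ, 0 < M ∧ ∀ t ∈ Set.Ioc (-1:ℝ) 1, ∀ (lam : ℂ) (Ψ : ℝ → Fin m → ℂ),
      IsBlochPair Q t lam Ψ → IsNormalized Ψ →
      ∀ x ∈ Set.Icc (0:ℝ) Real.pi, Real.sqrt (∑ i, ‖Ψ x i‖ ^ 2) < M := by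
  have cA : Continuous fun x => Matrix.toEuclideanCLM (n := Fin m) (𝕜 := ℂ) (Q x) := by
    have : Continuous (Matrix.toEuclideanCLM (n := Fin m) (𝕜 := ℂ)).toAlgEquiv.toLinearMap :=
      LinearMap.continuous_of_finiteDimensional _
    exact this.comp hQcont
  obtain ⟨K, hK⟩ := (isCompact_Icc (a := (0:ℝ)) (b := Real.pi)).exists_bound_of_continuousOn
    cA.continuousOn
  have hK0 : 0 ≤ K := (norm_nonneg _).trans (hK 0 ⟨le_rfl, Real.pi_pos.le⟩)
  refine ⟨Real.sqrt (2 * (1 + (3 * K + 1)) + 1), by positivity, ?_⟩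
  rintro t - lam Ψ ⟨-, hC, hode, hper⟩ hnorm x hx
  set L := (EuclideanSpace.equiv (Fin m) ℂ).symm.toContinuousLinearMap.restrictScalars ℝ with hL
  have hLv : ∀ v, L v = WithLp.toLp 2 v := fun v => rfl
  have hLn : ∀ v, ‖L v‖ ^ 2 = ∑ i, ‖v i‖ ^ 2 := fun v => by
    rw [hLv, EuclideanSpace.norm_sq_eq]
  have hLs : ∀ (z : ℂ) v, L (z • v) = z • L v := fun z v => rfl
  have hC1 : ContDiff ℝ 1 (deriv Ψ) := by
    have : ContDiff ℝ (1 + 1) Ψ := by simpa [one_add_one_eq_two] using hC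
    exact (contDiff_succ_iff_deriv.1 this).2.2
  have d1 : ∀ x, HasDerivAt Ψ (deriv Ψ x) x := fun x =>
    (hC.differentiable (by norm_num) x).hasDerivAt
  have d2 : ∀ x, HasDerivAt (deriv Ψ) (deriv (deriv Ψ) x) x := fun x =>
    (hC1.differentiable (by norm_num) x).hasDerivAt
  have c2 : Continuous (deriv (deriv Ψ)) := hC1.continuous_deriv (by norm_num)
  have hper' : ∀ x, deriv Ψ (x + Real.pi) = blochPhase t • deriv Ψ x := by
    intro x
    have e1 : HasDerivAt (fun y => Ψ (y + Real.pi)) (deriv Ψ (x + Real.pi)) x :=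
      (d1 _).comp_add_const x Real.pi
    have e2 : HasDerivAt (fun y => Ψ (y + Real.pi)) (blochPhase t • deriv Ψ x) x := by
      rw [funext hper]
      exact (d1 x).const_smul (blochPhase t)
    exact e1.unique e2
  have main := bloch_abstract (fun x => L (Ψ x)) (fun x => L (deriv Ψ x))
    (fun x => L (deriv (deriv Ψ) x))
    (fun x => Matrix.toEuclideanCLM (n := Fin m) (𝕜 := ℂ) (Q x) (L (Ψ x)))
    lam (blochPhase t) K hK0
    (fun x => L.hasFDerivAt.comp_hasDerivAt x (d1 x))
    (fun x => L.hasFDerivAt.comp_hasDerivAt x (d2 x))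
    (L.continuous.comp c2)
    (cA.clm_apply (L.continuous.comp hC.continuous))
    (by
      intro x
      have h := hode x
      have h' : deriv (deriv Ψ) x = (Q x).mulVec (Ψ x) - lam • Ψ x := by
        rw [← h]; abel
      show L (deriv (deriv Ψ) x) = _
      rw [h', map_sub, hLs, hLv, hLv, Matrix.toEuclideanCLM_toLp])
    (fun x hx => (ContinuousLinearMap.le_opNorm _ _).trans
      (mul_le_mul_of_nonneg_right (hK x hx) (norm_nonneg _)))
    (by
      have : Complex.I * Real.pi * t = ((Real.pi * t : ℝ) : ℂ) * Complex.I := by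
        push_cast; ring
      rw [blochPhase, this, Complex.norm_exp_ofReal_mul_I])
    (by
      have := hper 0
      rw [zero_add] at this
      show L (Ψ Real.pi) = _
      rw [this, hLs])
    (by
      have := hper' 0
      rw [zero_add] at this
      show L (deriv Ψ Real.pi) = _
      rw [this, hLs])
    (by
      simp only [hLn]
      exact hnorm) x hx
  simp only [hLn] at main
  exact Real.sqrt_lt_sqrt (Finset.sum_nonneg fun i _ => by positivity) (by linarith)
end
end

section
/- Suppose that the matrix A = ∫₀^π Q(x) dx has no real eigenvalues. Then there exist real numbers a ≤ b such that every real Bloch eigenvalue of L(Q) lies in [a,b]; that is, σ(L(Q)) ∩ ℝ ⊆ [a,b]. -/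
open MeasureTheory Set Filter Topology Metric

open scoped Classical

noncomputable section

/-- The mean matrix `A = ∫₀^π Q(x) dx`. -/
def meanMatrix {m : ℕ} (Q : ℝ → Matrix (Fin m) (Fin m) ℂ) : Matrix (Fin m) (Fin m) ℂ :=
  Matrix.of fun i j => ∫ x in (0:ℝ)..Real.pi, Q x i j

/-- doubling bound -/
lemma aux_double {F : Type*} [NormedAddCommGroup F] [NormedSpace ℝ F] (w w' : ℝ → F) (k : ℝ)
    (hk0 : 0 ≤ k) (hk : 2 * Real.pi * k ≤ 1) (hw : ∀ x, HasDerivAt w (w' x) x)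
    (hb : ∀ x, ‖w' x‖ ≤ k * ‖w x‖) :
    ∀ x ∈ Set.Icc (0:ℝ) Real.pi, ‖w x‖ ≤ 2 * ‖w 0‖ := by
  have hpi := Real.pi_pos
  have hc : Continuous w := continuous_iff_continuousAt.2 fun x => (hw x).continuousAt
  obtain ⟨x0, hx0, hmax⟩ := isCompact_Icc.exists_isMaxOn (s := Set.Icc (0:ℝ) Real.pi)
    ⟨0, by simp [hpi.le]⟩ (hc.norm.continuousOn)
  have hM : ∀ x ∈ Set.Icc (0:ℝ) Real.pi, ‖w x‖ ≤ ‖w x0‖ := fun x hx => hmax hx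
  have h1 : ‖w x0 - w 0‖ ≤ (k * ‖w x0‖) * (x0 - 0) := by
    apply norm_image_sub_le_of_norm_deriv_le_segment' (f' := w') (b := Real.pi) _ _ x0 hx0
    · intro x hx; exact (hw x).hasDerivWithinAt
    · intro x hx
      exact (hb x).trans (by gcongr; exact hM x ⟨hx.1, hx.2.le⟩)
  have h2 : ‖w x0‖ ≤ ‖w 0‖ + ‖w x0 - w 0‖ := by
    simpa using norm_add_le (w 0) (w x0 - w 0)
  have h3 : (k * ‖w x0‖) * (x0 - 0) ≤ ‖w x0‖ / 2 := by
    have : (k * ‖w x0‖) * (x0 - 0) ≤ (k * ‖w x0‖) * Real.pi := by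
      gcongr; linarith [hx0.2]
    nlinarith [norm_nonneg (w x0)]
  intro x hx
  linarith [hM x hx]

lemma aux_exp_norm (r x : ℝ) : ‖Complex.exp (-(2 * Complex.I * r * x))‖ = 1 := by
  rw [Complex.norm_exp]; simp

lemma aux_coef_norm (r : ℝ) : ‖(2 * Complex.I * (r:ℂ))⁻¹‖ = (2 * |r|)⁻¹ := by
  simp [norm_inv]

section aux

variable {m : ℕ}

/-- right-hand side of the transformed system -/
def rhsF (q : ℝ → (Fin m → ℂ) →L[ℂ] (Fin m → ℂ)) (r x : ℝ) (a b : Fin m → ℂ) : Fin m → ℂ :=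
  (2 * Complex.I * (r:ℂ))⁻¹ • (q x a - Complex.exp (-(2 * Complex.I * r * x)) • q x b)

lemma rhsF_norm (q : ℝ → (Fin m → ℂ) →L[ℂ] (Fin m → ℂ)) (K : ℝ) (hK : ∀ x, ‖q x‖ ≤ K)
    (r x : ℝ) (a b : Fin m → ℂ) (D : ℝ) (ha : ‖a‖ ≤ D) (hb : ‖b‖ ≤ D) :
    ‖rhsF q r x a b‖ ≤ K / |r| * D := by
  have hK0 : 0 ≤ K := (norm_nonneg _).trans (hK 0)
  have h1 : ∀ c, ‖c‖ ≤ D → ‖q x c‖ ≤ K * D := fun c hc =>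
    ((q x).le_opNorm c).trans (mul_le_mul (hK x) hc (norm_nonneg _) hK0)
  have h2 : ‖q x a - Complex.exp (-(2 * Complex.I * r * x)) • q x b‖ ≤ 2 * (K * D) := by
    refine (norm_sub_le _ _).trans ?_
    rw [norm_smul, aux_exp_norm]
    linarith [h1 a ha, h1 b hb]
  rw [rhsF, norm_smul, aux_coef_norm]
  calc (2 * |r|)⁻¹ * _ ≤ (2 * |r|)⁻¹ * (2 * (K * D)) := by gcongr
    _ = _ := by rw [mul_inv]; ring

/-- Riemann–Lebesgue integral -/
def RLint (q : ℝ → (Fin m → ℂ) →L[ℂ] (Fin m → ℂ)) (r : ℝ) : (Fin m → ℂ) →L[ℂ] (Fin m → ℂ) :=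
  ∫ x in (0:ℝ)..Real.pi, Complex.exp (-(2 * Complex.I * r * x)) • q x

lemma aux_core (q : ℝ → (Fin m → ℂ) →L[ℂ] (Fin m → ℂ)) (hq : Continuous q) (K : ℝ)
    (hK : ∀ x, ‖q x‖ ≤ K) (r : ℝ) (hr0 : r ≠ 0) (hr : 2 * Real.pi * K ≤ |r|)
    (u v : ℝ → Fin m → ℂ)
    (hu : ∀ x, HasDerivAt u (rhsF q r x (u x) (v x)) x)
    (hv : ∀ x, HasDerivAt v (rhsF q (-r) x (v x) (u x)) x)
    (ω : ℂ) (hω : ‖ω‖ = 1) (hper : u Real.pi = ω • u 0) (hle : ‖v 0‖ ≤ ‖u 0‖)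
    (hne : 0 < ‖u 0‖) (δ : ℝ)
    (hδ : ∀ (s : ℝ) (w : Fin m → ℂ),
      δ * ‖w‖ ≤ ‖(∫ x in (0:ℝ)..Real.pi, q x) w - (s:ℂ) • w‖) :
    δ ≤ ‖RLint q r‖ + 8 * Real.pi ^ 2 * K ^ 2 / |r| := by
  have hpi := Real.pi_pos
  have hK0 : 0 ≤ K := (norm_nonneg _).trans (hK 0)
  have hrp : 0 < |r| := abs_pos.2 hr0
  set N := ‖u 0‖ with hN
  have hdb := aux_double (fun x => (u x, v x))
    (fun x => (rhsF q r x (u x) (v x), rhsF q (-r) x (v x) (u x))) (K / |r|) (by positivity)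
    (by rw [← mul_div_assoc, div_le_one hrp]; exact hr)
    (fun x => (hu x).prodMk (hv x))
    (fun x => by
      rw [Prod.norm_def]
      apply max_le
      · exact rhsF_norm q K hK r x _ _ _ (norm_fst_le (u x, v x)) (norm_snd_le (u x, v x))
      · have := rhsF_norm q K hK (-r) x _ _ _ (norm_snd_le (u x, v x)) (norm_fst_le (u x, v x))
        rwa [abs_neg] at this)
  have hN0 : ‖(u 0, v 0)‖ = N := by rw [Prod.norm_def]; exact max_eq_left hle
  simp only [hN0] at hdb
  have hbu : ∀ x ∈ Set.Icc (0:ℝ) Real.pi, ‖u x‖ ≤ 2 * N := fun x hx =>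
    (norm_fst_le (u x, v x)).trans (hdb x hx)
  have hbv : ∀ x ∈ Set.Icc (0:ℝ) Real.pi, ‖v x‖ ≤ 2 * N := fun x hx =>
    (norm_snd_le (u x, v x)).trans (hdb x hx)
  set D := K / |r| * (2 * N) * Real.pi with hD
  have hdu : ∀ x ∈ Set.Icc (0:ℝ) Real.pi, ‖u x - u 0‖ ≤ D := by
    intro x hx
    have := norm_image_sub_le_of_norm_deriv_le_segment' (f := u) (a := 0) (b := Real.pi)
      (C := K / |r| * (2 * N))
      (fun x hx => (hu x).hasDerivWithinAt)
      (fun x hx => rhsF_norm q K hK r x _ _ _ (hbu x ⟨hx.1, hx.2.le⟩) (hbv x ⟨hx.1, hx.2.le⟩)) x hx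
    refine this.trans ?_
    rw [hD]; gcongr; linarith [hx.2]
  have hdv : ∀ x ∈ Set.Icc (0:ℝ) Real.pi, ‖v x - v 0‖ ≤ D := by
    intro x hx
    have := norm_image_sub_le_of_norm_deriv_le_segment' (f := v) (a := 0) (b := Real.pi)
      (C := K / |r| * (2 * N))
      (fun x hx => (hv x).hasDerivWithinAt)
      (fun x hx => by
        have := rhsF_norm q K hK (-r) x _ _ _ (hbv x ⟨hx.1, hx.2.le⟩) (hbu x ⟨hx.1, hx.2.le⟩)
        rwa [abs_neg] at this) x hx
    refine this.trans ?_
    rw [hD]; gcongr; linarith [hx.2]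
  -- the comparison function
  have hqe : Continuous fun x : ℝ => Complex.exp (-(2 * Complex.I * r * x)) • q x := by fun_prop
  have hI1 : ∀ x, HasDerivAt (fun y => (∫ s in (0:ℝ)..y, q s) (u 0)) (q x (u 0)) x := by
    intro x
    have h := intervalIntegral.integral_hasDerivAt_right (hq.intervalIntegrable 0 x)
      (hq.stronglyMeasurableAtFilter _ _) hq.continuousAt
    exact ((ContinuousLinearMap.apply ℂ (Fin m → ℂ) (u 0)).restrictScalars ℝ).hasFDerivAt.comp_hasDerivAt x h
  have hI2 : ∀ x : ℝ, HasDerivAt (fun y : ℝ => (∫ s in (0:ℝ)..y,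
      Complex.exp (-(2 * Complex.I * r * s)) • q s) (v 0))
      ((Complex.exp (-(2 * Complex.I * r * x)) • q x) (v 0)) x := by
    intro x
    have h := intervalIntegral.integral_hasDerivAt_right (hqe.intervalIntegrable 0 x)
      (hqe.stronglyMeasurableAtFilter _ _) hqe.continuousAt
    exact ((ContinuousLinearMap.apply ℂ (Fin m → ℂ) (v 0)).restrictScalars ℝ).hasFDerivAt.comp_hasDerivAt x h
  have hF := norm_image_sub_le_of_norm_deriv_le_segment'
    (f := fun y : ℝ => u y - (2 * Complex.I * (r:ℂ))⁻¹ • ((∫ s in (0:ℝ)..y, q s) (u 0)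
      - (∫ s in (0:ℝ)..y, Complex.exp (-(2 * Complex.I * r * s)) • q s) (v 0)))
    (f' := fun x => rhsF q r x (u x) (v x) - (2 * Complex.I * (r:ℂ))⁻¹ • (q x (u 0) -
      (Complex.exp (-(2 * Complex.I * r * x)) • q x) (v 0)))
    (a := 0) (b := Real.pi) (C := K / |r| * D)
    (fun x hx => ((hu x).fun_sub (((hI1 x).fun_sub (hI2 x)).fun_const_smul _)).hasDerivWithinAt)
    (fun x hx => by
      have hx' : x ∈ Set.Icc (0:ℝ) Real.pi := ⟨hx.1, hx.2.le⟩
      have := rhsF_norm q K hK r x _ _ _ (hdu x hx') (hdv x hx')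
      refine le_trans (le_of_eq (congrArg norm ?_)) this
      have e0 : (Complex.exp (-(2 * Complex.I * r * x)) • q x) (v 0) =
          Complex.exp (-(2 * Complex.I * r * x)) • q x (v 0) := rfl
      simp only [rhsF, map_sub, e0]
      module) Real.pi ⟨hpi.le, le_rfl⟩
  have hc0 : (2 * Complex.I * (r:ℂ)) ≠ 0 := by simp [hr0]
  simp only [intervalIntegral.integral_same, zero_apply, sub_zero,
    smul_zero, hper] at hF
  change ‖ω • u 0 - (2 * Complex.I * (r:ℂ))⁻¹ • ((∫ s in (0:ℝ)..Real.pi, q s) (u 0) -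
    (RLint q r) (v 0)) - u 0‖ ≤ _ at hF
  set A := (∫ s in (0:ℝ)..Real.pi, q s) with hA
  set B := RLint q r with hB
  set z : ℂ := 2 * Complex.I * r * (ω - 1) with hz
  have hcn : ‖(2 * Complex.I * (r:ℂ))‖ = 2 * |r| := by simp
  have hF2 : ‖z • u 0 - A (u 0) + B (v 0)‖ ≤ 8 * Real.pi ^ 2 * K ^ 2 / |r| * N - 4 * Real.pi ^ 2 * K ^ 2 / |r| * N := by
    have e : z • u 0 - A (u 0) + B (v 0) = (2 * Complex.I * (r:ℂ)) • (ω • u 0 - (2 * Complex.I * (r:ℂ))⁻¹ • (A (u 0) - B (v 0)) - u 0) := by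
      rw [smul_sub, smul_sub, smul_inv_smul₀ hc0, hz]
      module
    rw [e, norm_smul, hcn]
    calc _ ≤ 2 * |r| * (K / |r| * D * Real.pi) := by gcongr
      _ = _ := by rw [hD]; field_simp; ring
  have hω1 : ‖ω - 1‖ ≤ 2 * Real.pi * K / |r| := by
    have := hdu Real.pi ⟨hpi.le, le_rfl⟩
    rw [hper, show ω • u 0 - u 0 = (ω - 1) • u 0 by module, norm_smul] at this
    have h2 : ‖ω - 1‖ * N ≤ (2 * Real.pi * K / |r|) * N := by
      refine this.trans (le_of_eq ?_)
      rw [hD]; field_simp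
    exact le_of_mul_le_mul_right h2 hne
  have hzim : |z.im| ≤ 4 * Real.pi ^ 2 * K ^ 2 / |r| := by
    have e1 : z.im = 2 * r * (ω.re - 1) := by simp [hz]
    have e2 : ‖ω - 1‖ ^ 2 = - 2 * (ω.re - 1) := by
      have h1 : ‖ω‖ ^ 2 = ω.re * ω.re + ω.im * ω.im := by rw [← Complex.normSq_eq_norm_sq, Complex.normSq_apply]
      rw [hω] at h1
      rw [← Complex.normSq_eq_norm_sq, Complex.normSq_apply]
      simp; linarith
    have e3 : z.im = - (r * ‖ω - 1‖ ^ 2) := by rw [e1, e2]; ring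
    rw [e3, abs_neg, abs_mul, abs_of_nonneg (sq_nonneg ‖ω - 1‖)]
    calc |r| * ‖ω - 1‖ ^ 2 ≤ |r| * (2 * Real.pi * K / |r|) ^ 2 := by gcongr
      _ = _ := by field_simp; ring
  have hfin := hδ z.re (u 0)
  have hzz : z = (z.re : ℂ) + z.im * Complex.I := (Complex.re_add_im z).symm
  have e : A (u 0) - (z.re : ℂ) • u 0 = -(z • u 0 - A (u 0) + B (v 0)) + B (v 0)
      + (z.im * Complex.I) • u 0 := by
    have : z • u 0 = (z.re : ℂ) • u 0 + (z.im * Complex.I) • u 0 := by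
      rw [← add_smul, ← hzz]
    rw [this]; abel
  have hb1 : ‖B (v 0)‖ ≤ ‖B‖ * N := (B.le_opNorm _).trans (by gcongr)
  have hb2 : ‖((z.im : ℂ) * Complex.I) • u 0‖ ≤ 4 * Real.pi ^ 2 * K ^ 2 / |r| * N := by
    rw [norm_smul]
    simp only [norm_mul, Complex.norm_I, mul_one, Complex.norm_real, Real.norm_eq_abs]
    gcongr
  rw [e] at hfin
  have h3 := norm_add₃_le (a := -(z • u 0 - A (u 0) + B (v 0))) (b := B (v 0))
    (c := ((z.im : ℂ) * Complex.I) • u 0)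
  rw [norm_neg] at h3
  have : δ * N ≤ (‖B‖ + 8 * Real.pi ^ 2 * K ^ 2 / |r|) * N := by
    rw [add_mul]; linarith
  exact le_of_mul_le_mul_right this hne

lemma aux_RL (q : ℝ → (Fin m → ℂ) →L[ℂ] (Fin m → ℂ)) :
    Tendsto (RLint q) (cocompact ℝ) (𝓝 0) := by
  have h := Real.tendsto_integral_exp_smul_cocompact
    (fun x => Set.indicator (Set.Ioc (0:ℝ) Real.pi) q x)
  have hc : Tendsto (fun r : ℝ => r * (Real.pi)⁻¹) (cocompact ℝ) (cocompact ℝ) :=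
    (Homeomorph.mulRight₀ (Real.pi)⁻¹ (inv_ne_zero Real.pi_ne_zero)).isClosedEmbedding.tendsto_cocompact
  refine (h.comp hc).congr fun r => ?_
  simp only [Function.comp, RLint]
  rw [intervalIntegral.integral_of_le Real.pi_pos.le, ← integral_indicator measurableSet_Ioc]
  congr 1
  ext1 x
  by_cases hx : x ∈ Set.Ioc (0:ℝ) Real.pi
  · simp only [Set.indicator_of_mem hx]
    rw [Circle.smul_def, Real.fourierChar_apply]
    congr 2
    push_cast
    field_simp
  · simp only [Set.indicator_of_notMem hx]
    rw [Circle.smul_def, smul_zero]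

lemma aux_delta (A : (Fin m → ℂ) →L[ℂ] (Fin m → ℂ))
    (hA : ∀ (s : ℝ) (w : Fin m → ℂ), A w = (s:ℂ) • w → w = 0) :
    ∃ δ > 0, ∀ (s : ℝ) (w : Fin m → ℂ), δ * ‖w‖ ≤ ‖A w - (s:ℂ) • w‖ := by
  have hcomp : IsCompact (Set.Icc (-(‖A‖ + 1)) (‖A‖ + 1) ×ˢ Metric.sphere (0 : Fin m → ℂ) 1) :=
    isCompact_Icc.prod (isCompact_sphere _ _)
  have hcont : Continuous fun p : ℝ × (Fin m → ℂ) => ‖A p.2 - (p.1:ℂ) • p.2‖ := by fun_prop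
  obtain ⟨ε, hε, hε'⟩ : ∃ ε > 0, ∀ p ∈ (Set.Icc (-(‖A‖ + 1)) (‖A‖ + 1) ×ˢ Metric.sphere (0 : Fin m → ℂ) 1),
      ε ≤ ‖A p.2 - (p.1:ℂ) • p.2‖ := by
    rcases (Set.Icc (-(‖A‖ + 1)) (‖A‖ + 1) ×ˢ Metric.sphere (0 : Fin m → ℂ) 1).eq_empty_or_nonempty with h | h
    · exact ⟨1, one_pos, fun p hp => by rw [h] at hp; exact hp.elim⟩
    · obtain ⟨p, hp, hmin⟩ := hcomp.exists_isMinOn h hcont.continuousOn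
      refine ⟨_, ?_, fun p' hp' => hmin hp'⟩
      change 0 < ‖A p.2 - (p.1:ℂ) • p.2‖
      rw [norm_pos_iff, sub_ne_zero]
      intro h0
      have h1 := hA _ _ h0
      have h2 : ‖p.2‖ = 1 := by simpa using hp.2
      simp [h1] at h2
  refine ⟨min ε 1, by positivity, fun s w => ?_⟩
  rcases eq_or_ne w 0 with rfl | hw
  · simp
  have hwn : 0 < ‖w‖ := norm_pos_iff.2 hw
  by_cases hs : |s| ≤ ‖A‖ + 1
  · have hmem : (s, ((‖w‖⁻¹ : ℝ) : ℂ) • w) ∈ (Set.Icc (-(‖A‖ + 1)) (‖A‖ + 1) ×ˢ Metric.sphere (0 : Fin m → ℂ) 1) := by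
      refine ⟨abs_le.1 hs, ?_⟩
      simp [norm_smul, hwn.ne']
    have h := hε' _ hmem
    simp only [map_smul] at h
    rw [smul_comm, ← smul_sub, norm_smul] at h
    simp only [Complex.norm_real, norm_inv, norm_norm] at h
    rw [← div_eq_inv_mul, le_div_iff₀ hwn] at h
    refine le_trans ?_ h
    gcongr; exact min_le_left _ _
  · push Not at hs
    have h1 : ‖(s:ℂ) • w‖ - ‖A w‖ ≤ ‖A w - (s:ℂ) • w‖ := by
      rw [norm_sub_rev]; exact norm_sub_norm_le _ _
    have h2 := A.le_opNorm w
    rw [norm_smul, Complex.norm_real, Real.norm_eq_abs] at h1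
    have h3 : min ε 1 * ‖w‖ ≤ 1 * ‖w‖ := by gcongr; exact min_le_right _ _
    nlinarith

/-- The transformed functions -/
def Wf (Ψ : ℝ → Fin m → ℂ) (r x : ℝ) : Fin m → ℂ :=
  Complex.exp (-(Complex.I * r * x)) • (deriv Ψ x + (Complex.I * r) • Ψ x)

lemma Wf_sub (Ψ : ℝ → Fin m → ℂ) (r x : ℝ) (hr : r ≠ 0) :
    (2 * Complex.I * (r:ℂ))⁻¹ • (Wf Ψ r x - Complex.exp (-(2 * Complex.I * r * x)) • Wf Ψ (-r) x)
      = Complex.exp (-(Complex.I * r * x)) • Ψ x := by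
  have hc0 : (2 * Complex.I * (r:ℂ)) ≠ 0 := by simp [hr]
  rw [inv_smul_eq_iff₀ hc0, Wf, Wf, smul_smul, ← Complex.exp_add]
  have : -(2 * Complex.I * r * x) + -(Complex.I * ((-r : ℝ):ℂ) * x) = -(Complex.I * r * x) := by
    push_cast; ring
  rw [this]
  push_cast
  module

lemma Wf_deriv (q : ℝ → (Fin m → ℂ) →L[ℂ] (Fin m → ℂ)) (Ψ : ℝ → Fin m → ℂ)
    (h1 : ∀ x, HasDerivAt Ψ (deriv Ψ x) x) (r : ℝ) (hr : r ≠ 0)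
    (h2 : ∀ x, HasDerivAt (deriv Ψ) (q x (Ψ x) - ((r:ℂ)^2) • Ψ x) x) (x : ℝ) :
    HasDerivAt (Wf Ψ r) (rhsF q r x (Wf Ψ r x) (Wf Ψ (-r) x)) x := by
  have e : rhsF q r x (Wf Ψ r x) (Wf Ψ (-r) x) = Complex.exp (-(Complex.I * r * x)) • q x (Ψ x) := by
    rw [← map_smul, ← Wf_sub Ψ r x hr, rhsF]
    simp only [map_sub, map_smul]
  rw [e]
  have h3 : HasDerivAt (fun y : ℝ => Complex.exp (-(Complex.I * r * y)))
      (Complex.exp (-(Complex.I * r * x)) * (-(Complex.I * r * 1))) x := by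
    have : HasDerivAt (fun y : ℝ => (y:ℂ)) 1 x := Complex.ofRealCLM.hasDerivAt
    exact ((this.const_mul (Complex.I * r)).neg).cexp
  have h4 := h3.smul ((h2 x).add ((h1 x).const_smul (Complex.I * (r:ℂ))))
  have hI : (Complex.I * (r:ℂ)) * (Complex.I * r) = -(r:ℂ)^2 := by
    linear_combination (r:ℂ)^2 * Complex.I_mul_I
  have e2 : (Complex.exp (-(Complex.I * r * x)) * (-(Complex.I * r * 1))) • ((deriv Ψ x + (Complex.I * (r:ℂ)) • Ψ x)) =
     Complex.exp (-(Complex.I * r * x)) • (-(Complex.I * (r:ℂ)) • deriv Ψ x + (r:ℂ)^2 • Ψ x) := by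
    rw [mul_smul, smul_add, smul_smul, mul_one, neg_mul, hI, neg_neg]
  have e3 : Complex.exp (-(Complex.I * r * x)) • q x (Ψ x) =
      (Complex.exp (-(Complex.I * ↑r * ↑x)) • ((q x) (Ψ x) - (r:ℂ) ^ 2 • Ψ x + (Complex.I * ↑r) • deriv Ψ x) +
      (Complex.exp (-(Complex.I * ↑r * ↑x)) * -(Complex.I * ↑r * 1)) • (deriv Ψ x + (Complex.I * (r:ℂ)) • Ψ x)) := by
    rw [e2]; module
  rw [e3]
  exact h4

lemma aux_neg (q : ℝ → (Fin m → ℂ) →L[ℂ] (Fin m → ℂ)) (K : ℝ)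
    (hK : ∀ x, ‖q x‖ ≤ K) (Ψ : ℝ → Fin m → ℂ) (l : ℝ) (hl : l < -(m * K)) (ω : ℂ) (hω : ‖ω‖ = 1)
    (h1 : ∀ x, HasDerivAt Ψ (deriv Ψ x) x)
    (h2 : ∀ x, HasDerivAt (deriv Ψ) (q x (Ψ x) - (l:ℂ) • Ψ x) x)
    (hp : ∀ x, Ψ (x + Real.pi) = ω • Ψ x)
    (hp' : ∀ x, deriv Ψ (x + Real.pi) = ω • deriv Ψ x) : Ψ = 0 := by
  have hpi := Real.pi_pos
  have hK0 : 0 ≤ K := (norm_nonneg _).trans (hK 0)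
  set g : ℝ → ℝ := fun x => ∑ i, inner ℝ (Ψ x i) (deriv Ψ x i) with hg
  have hgp : ∀ x, g (x + Real.pi) = g x := by
    intro x
    simp only [hg, hp, hp']
    refine Finset.sum_congr rfl fun i _ => ?_
    have h : ω.re * ω.re + ω.im * ω.im = 1 := by
      rw [← Complex.normSq_apply, Complex.normSq_eq_norm_sq, hω]; norm_num
    simp only [Complex.inner, Pi.smul_apply, smul_eq_mul, map_mul, Complex.mul_re, Complex.mul_im,
      Complex.conj_re, Complex.conj_im]
    linear_combination ((Ψ x i).re * (deriv Ψ x i).re + (Ψ x i).im * (deriv Ψ x i).im) * h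
  set g' : ℝ → ℝ := fun x => ∑ i, (inner ℝ (Ψ x i) ((q x (Ψ x) - (l:ℂ) • Ψ x) i)
    + inner ℝ (deriv Ψ x i) (deriv Ψ x i)) with hg'
  have hgd : ∀ x, HasDerivAt g (g' x) x := by
    intro x
    apply HasDerivAt.fun_sum
    intro i _
    exact (hasDerivAt_pi.1 (h1 x) i).inner ℝ (hasDerivAt_pi.1 (h2 x) i)
  have hlow : ∀ x, (-l - m * K) * ‖Ψ x‖ ^ 2 ≤ g' x := by
    intro x
    have hs : ‖Ψ x‖ ^ 2 ≤ ∑ i, ‖Ψ x i‖ ^ 2 := by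
      have hnn : 0 ≤ ∑ i, ‖Ψ x i‖ ^ 2 := by positivity
      have : ‖Ψ x‖ ≤ Real.sqrt (∑ i, ‖Ψ x i‖ ^ 2) := by
        rw [pi_norm_le_iff_of_nonneg (Real.sqrt_nonneg _)]
        intro i
        apply Real.le_sqrt_of_sq_le
        exact Finset.single_le_sum (f := fun i => ‖Ψ x i‖ ^ 2) (fun _ _ => by positivity) (Finset.mem_univ i)
      calc _ ≤ (Real.sqrt (∑ i, ‖Ψ x i‖ ^ 2))^2 := by gcongr
        _ = _ := Real.sq_sqrt hnn
    have ht : ∀ i, -(K * ‖Ψ x‖^2) + (-l) * ‖Ψ x i‖ ^ 2 ≤ (inner ℝ (Ψ x i) ((q x (Ψ x) - (l:ℂ) • Ψ x) i)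
        + inner ℝ (deriv Ψ x i) (deriv Ψ x i)) := by
      intro i
      have e1 : (q x (Ψ x) - (l:ℂ) • Ψ x) i = q x (Ψ x) i - l • Ψ x i := by
        simp
      rw [e1, inner_sub_right, inner_smul_right, real_inner_self_eq_norm_sq, real_inner_self_eq_norm_sq]
      have e2 : |inner ℝ (Ψ x i) (q x (Ψ x) i)| ≤ K * ‖Ψ x‖^2 := by
        refine (abs_real_inner_le_norm _ _).trans ?_
        have a1 := norm_le_pi_norm (Ψ x) i
        have a2 : ‖q x (Ψ x) i‖ ≤ K * ‖Ψ x‖ :=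
          (norm_le_pi_norm _ i).trans (((q x).le_opNorm _).trans (by gcongr; exact hK x))
        calc _ ≤ ‖Ψ x‖ * (K * ‖Ψ x‖) := by gcongr
          _ = _ := by ring
      have := (abs_le.1 e2).1
      nlinarith [sq_nonneg ‖deriv Ψ x i‖]
    have hsum := Finset.sum_le_sum (s := Finset.univ) fun i _ => ht i
    rw [Finset.sum_add_distrib, ← Finset.mul_sum] at hsum
    simp only [Finset.sum_const, Finset.card_univ, Fintype.card_fin, nsmul_eq_mul] at hsum
    have hl0 : 0 ≤ -l := by have : 0 ≤ m * K := by positivity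
                            linarith
    have := mul_le_mul_of_nonneg_left hs hl0
    simp only [hg']
    linarith
  have hpos : 0 < -l - m * K := by linarith
  have hmono : Monotone g := by
    apply monotone_of_deriv_nonneg (fun x => (hgd x).differentiableAt)
    intro x
    rw [(hgd x).deriv]
    exact le_trans (by positivity) (hlow x)
  funext x
  have hconst : g =ᶠ[𝓝 x] fun _ => g x := by
    filter_upwards [Ioo_mem_nhds (show x - Real.pi < x by linarith) (show x < x + Real.pi by linarith)] with y hy
    have b1 := hmono hy.1.le
    have b2 := hmono hy.2.le
    have b3 := hgp (x - Real.pi)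
    rw [sub_add_cancel] at b3
    rw [hgp x] at b2
    linarith
  have hz : g' x = 0 := (hgd x).unique ((hasDerivAt_const x (g x)).congr_of_eventuallyEq hconst)
  have := hlow x
  rw [hz] at this
  have h0 : ‖Ψ x‖ ^ 2 ≤ 0 := by
    by_contra hcon
    push Not at hcon
    nlinarith [mul_pos hpos hcon]
  have : ‖Ψ x‖ = 0 := by nlinarith [norm_nonneg (Ψ x)]
  simpa using norm_eq_zero.1 this

/-- CLM form of a matrix, as a linear map -/
def matL : Matrix (Fin m) (Fin m) ℂ →ₗ[ℂ] ((Fin m → ℂ) →L[ℂ] (Fin m → ℂ)) :=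
  (LinearMap.toContinuousLinearMap.toLinearMap).comp (Matrix.toLin'.toLinearMap)

lemma matL_apply (M : Matrix (Fin m) (Fin m) ℂ) (w : Fin m → ℂ) : matL M w = M.mulVec w := by
  simp [matL]

lemma aux_mean (Q : ℝ → Matrix (Fin m) (Fin m) ℂ) (hQ : Continuous Q)
    (hq : Continuous fun x => matL (Q x)) (w : Fin m → ℂ) :
    (∫ x in (0:ℝ)..Real.pi, matL (Q x)) w = (meanMatrix Q).mulVec w := by
  rw [ContinuousLinearMap.intervalIntegral_apply (hq.intervalIntegrable _ _)]
  have hc : Continuous fun x => matL (Q x) w := by fun_prop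
  funext i
  have h := (ContinuousLinearMap.proj (R := ℂ) (φ := fun _ : Fin m => ℂ) i).intervalIntegral_comp_comm
    (hc.intervalIntegrable (μ := volume) 0 Real.pi)
  simp only [ContinuousLinearMap.proj_apply] at h
  rw [← h]
  simp only [matL_apply, Matrix.mulVec, dotProduct, meanMatrix, Matrix.of_apply]
  rw [intervalIntegral.integral_finsetSum]
  · simp
  · intro j _
    have : Continuous fun x => Q x i j := hQ.matrix_elem i j
    exact (this.mul continuous_const).intervalIntegrable _ _

end aux

/-- if `A = ∫₀^π Q(x) dx` has no real eigenvalues, then the real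
component of the spectrum of `L(Q)` is contained in a finite interval `[a,b]`. -/
theorem statement14 {m : ℕ} (hm : 1 ≤ m) (Q : ℝ → Matrix (Fin m) (Fin m) ℂ)
    (hQcont : Continuous Q)
    (hQper : ∀ x : ℝ, Q (x + Real.pi) = Q x)
    (hA : ∀ μ : ℂ, (meanMatrix Q).charpoly.IsRoot μ → μ.im ≠ 0) :
    ∃ a b : ℝ, a ≤ b ∧
      ∀ lam : ℂ, lam ∈ SpecLQ Q → lam.im = 0 → lam.re ∈ Set.Icc a b := by
  have hpi := Real.pi_pos
  set q : ℝ → (Fin m → ℂ) →L[ℂ] (Fin m → ℂ) := fun x => matL (Q x) with hqdef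
  have hq : Continuous q := (LinearMap.continuous_of_finiteDimensional matL).comp hQcont
  have hqp : Function.Periodic q Real.pi := fun x => by simp only [hqdef, hQper]
  obtain ⟨K, hK⟩ : ∃ K, ∀ x, ‖q x‖ ≤ K := by
    obtain ⟨K, hK⟩ := isCompact_Icc.exists_bound_of_continuousOn (s := Set.Icc (0:ℝ) Real.pi) hq.continuousOn
    refine ⟨K, fun x => ?_⟩
    obtain ⟨y, hy, hxy⟩ := hqp.exists_mem_Ico₀ hpi x
    rw [hxy]; exact hK y ⟨hy.1, hy.2.le⟩
  have hK0 : 0 ≤ K := (norm_nonneg _).trans (hK 0)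
  obtain ⟨δ, hδ0, hδ⟩ := aux_delta (∫ x in (0:ℝ)..Real.pi, q x) (by
    intro s w hw
    by_contra hne
    rw [aux_mean Q hQcont hq] at hw
    refine hA (s:ℂ) ?_ (by simp)
    rw [← Matrix.charpoly_toLin', ← Module.End.hasEigenvalue_iff_isRoot_charpoly]
    refine Module.End.hasEigenvalue_of_hasEigenvector (x := w) ⟨?_, hne⟩
    rw [Module.End.mem_eigenspace_iff, Matrix.toLin'_apply]; exact hw)
  have hlim : Tendsto (fun r : ℝ => ‖RLint q r‖ + 8 * Real.pi ^ 2 * K ^ 2 / |r|) (cocompact ℝ) (𝓝 0) := by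
    have h1 := (aux_RL q).norm
    have h2 : Tendsto (fun r : ℝ => |r|) (cocompact ℝ) atTop := tendsto_norm_cocompact_atTop (E := ℝ)
    have h3 := h2.const_div_atTop (8 * Real.pi ^ 2 * K ^ 2)
    simpa using h1.add h3
  have hev := hlim.eventually (gt_mem_nhds hδ0)
  rw [cocompact_eq_atBot_atTop, eventually_sup] at hev
  obtain ⟨R1, hR1⟩ := eventually_atBot.1 hev.1
  obtain ⟨R2, hR2⟩ := eventually_atTop.1 hev.2
  set R : ℝ := max (max (-R1) R2) (max (2 * Real.pi * K) 1) with hR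
  have hRa : -R1 ≤ R := (le_max_left _ _).trans (le_max_left _ _)
  have hRb : R2 ≤ R := (le_max_right _ _).trans (le_max_left _ _)
  have hRc : 2 * Real.pi * K ≤ R := (le_max_left _ _).trans (le_max_right _ _)
  have hRd : 1 ≤ R := (le_max_right _ _).trans (le_max_right _ _)
  refine ⟨-(m * K), R ^ 2, ?_, ?_⟩
  · have : 0 ≤ m * K := by positivity
    nlinarith [sq_nonneg R]
  rintro lam ⟨t, -, Ψ, hne, hC2, hode, hbl⟩ him
  have hlam : lam = (lam.re : ℂ) := by apply Complex.ext <;> simp [him]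
  have hω : ‖blochPhase t‖ = 1 := by
    rw [blochPhase, Complex.norm_exp]; simp
  set ω := blochPhase t
  have h1 : ∀ x, HasDerivAt Ψ (deriv Ψ x) x := fun x =>
    (hC2.differentiable (by norm_num) x).hasDerivAt
  have h2 : ∀ x, HasDerivAt (deriv Ψ) (q x (Ψ x) - (lam.re:ℂ) • Ψ x) x := by
    intro x
    have hd : ContDiff ℝ 1 (deriv Ψ) := by
      have : ContDiff ℝ (1 + 1) Ψ := by simpa [one_add_one_eq_two] using hC2
      exact (contDiff_succ_iff_deriv.1 this).2.2
    have h := (hd.differentiable (by norm_num) x).hasDerivAt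
    have e := hode x
    rw [hlam] at e
    have e3 : q x (Ψ x) - (lam.re:ℂ) • Ψ x = deriv (deriv Ψ) x := by
      rw [← e]
      simp only [hqdef, matL_apply]
      abel
    rw [e3]
    exact h
  have hbl' : ∀ x, deriv Ψ (x + Real.pi) = ω • deriv Ψ x := by
    intro x
    have a1 := (h1 (x + Real.pi)).comp_add_const x Real.pi
    have a2 := (h1 x).const_smul ω
    refine a1.unique (a2.congr_of_eventuallyEq (Eventually.of_forall fun y => ?_))
    simp [hbl y]
  constructor
  · by_contra hcon
    push Not at hcon
    exact hne (aux_neg q K hK Ψ lam.re hcon ω hω h1 h2 hbl hbl')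
  · by_contra hcon
    push Not at hcon
    have hl0 : 0 ≤ lam.re := (sq_nonneg R).trans hcon.le
    set r := Real.sqrt lam.re with hr
    have hrr : r ^ 2 = lam.re := Real.sq_sqrt hl0
    have hrR : R ≤ r := Real.le_sqrt_of_sq_le hcon.le
    have hr0 : 0 < r := by linarith
    have h2' : ∀ x, HasDerivAt (deriv Ψ) (q x (Ψ x) - ((r:ℂ)^2) • Ψ x) x := by
      intro x
      have := h2 x
      rw [← hrr] at this
      simpa using this
    have h2n : ∀ x, HasDerivAt (deriv Ψ) (q x (Ψ x) - (((-r:ℝ):ℂ)^2) • Ψ x) x := by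
      intro x; simpa using h2' x
    have hu := Wf_deriv q Ψ h1 r hr0.ne' h2'
    have hv := Wf_deriv q Ψ h1 (-r) (neg_ne_zero.2 hr0.ne') h2n
    have hab : |r| = r := abs_of_pos hr0
    have hWper : ∀ s : ℝ, ∃ w : ℂ, ‖w‖ = 1 ∧ Wf Ψ s Real.pi = w • Wf Ψ s 0 := by
      intro s
      refine ⟨Complex.exp (-(Complex.I * s * Real.pi)) * ω, ?_, ?_⟩
      · rw [norm_mul, hω, Complex.norm_exp]; simp
      · have b1 := hbl 0
        have b2 := hbl' 0
        rw [zero_add] at b1 b2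
        simp only [Wf, b1, b2]
        simp only [Complex.ofReal_zero, mul_zero, neg_zero, Complex.exp_zero, one_smul]
        module
    rw [neg_neg] at hv
    have hpos : 0 < ‖(Wf Ψ r 0, Wf Ψ (-r) 0)‖ := by
      by_contra hcon0
      have hz : ‖(Wf Ψ r 0, Wf Ψ (-r) 0)‖ = 0 := le_antisymm (not_lt.1 hcon0) (norm_nonneg _)
      have hdb := aux_double (fun x => (Wf Ψ r x, Wf Ψ (-r) x)) _ (K / |r|) (by positivity)
        (by rw [← mul_div_assoc, hab, div_le_one hr0]; exact hRc.trans hrR)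
        (fun x => (hu x).prodMk (hv x))
        (fun x => by
          rw [Prod.norm_def]
          apply max_le
          · exact rhsF_norm q K hK r x _ _ _ (norm_fst_le (Wf Ψ r x, Wf Ψ (-r) x)) (norm_snd_le (Wf Ψ r x, Wf Ψ (-r) x))
          · have := rhsF_norm q K hK (-r) x _ _ _ (norm_snd_le (Wf Ψ r x, Wf Ψ (-r) x)) (norm_fst_le (Wf Ψ r x, Wf Ψ (-r) x))
            rwa [abs_neg] at this)
      simp only [hz, mul_zero] at hdb
      apply hne
      funext x
      have hnp : Function.Periodic (fun x => ‖Ψ x‖) Real.pi := fun x => by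
        simp only [hbl, norm_smul, hω, one_mul]
      obtain ⟨y, hy, hxy⟩ := hnp.exists_mem_Ico₀ hpi x
      have hy0 := hdb y ⟨hy.1, hy.2.le⟩
      have hy1 : (Wf Ψ r y, Wf Ψ (-r) y) = 0 := norm_le_zero_iff.1 hy0
      have hs := Wf_sub Ψ r y hr0.ne'
      have hy2 : Wf Ψ r y = 0 := (Prod.ext_iff.1 hy1).1
      have hy3 : Wf Ψ (-r) y = 0 := (Prod.ext_iff.1 hy1).2
      rw [hy2, hy3] at hs
      simp only [smul_zero, sub_zero] at hs
      have hΨy : Ψ y = 0 := by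
        rcases smul_eq_zero.1 hs.symm with h | h
        · exact absurd h (Complex.exp_ne_zero _)
        · exact h
      simp only [hΨy, norm_zero] at hxy
      simpa using norm_eq_zero.1 hxy
    rw [Prod.norm_def] at hpos
    simp only at hpos
    rcases le_total ‖Wf Ψ (-r) 0‖ ‖Wf Ψ r 0‖ with hle | hle
    · rw [max_eq_left hle] at hpos
      obtain ⟨w, hw, hwp⟩ := hWper r
      have := aux_core q hq K hK r hr0.ne' (by rw [hab]; exact hRc.trans hrR) _ _ hu hv w hw hwp hle hpos δ hδ
      exact absurd (hR2 r (hRb.trans hrR)) (not_lt.2 this)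
    · rw [max_eq_right hle] at hpos
      obtain ⟨w, hw, hwp⟩ := hWper (-r)
      have := aux_core q hq K hK (-r) (neg_ne_zero.2 hr0.ne') (by rw [abs_neg, hab]; exact hRc.trans hrR) _ _ hv (by rw [neg_neg]; exact hu) w hw hwp hle hpos δ hδ
      exact absurd (hR1 (-r) (by linarith)) (not_lt.2 this)
end
end

section
/- Suppose the matrix A has a real eigenvalue μ_j of odd algebraic multiplicity. Then there exist a positive integer N, a constant c₁₁ > 0, and a sequence of positive reals δ_k with δ_k → 0 as k → ∞, such that for every integer k ≥ N there are finitely many pairwise disjoint closed intervals Γ_{k,j,1}, …, Γ_{k,j,l} contained both in σ(L(Q)) ∩ ℝ and in the interval Γ_{k,j} = (μ_j + (2k−1)², μ_j + (2k+1)²], whose total length satisfies |Γ_{k,j}| − Σ_{i=1}^{l} |Γ_{k,j,i}| < c₁₁ δ_k. -/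
open MeasureTheory Set Filter Topology Metric

open scoped Classical

noncomputable section

section LinODE

set_option linter.unusedSectionVars false

variable {𝔸 : Type*} [NormedRing 𝔸] [NormedAlgebra ℝ 𝔸] [CompleteSpace 𝔸]

/-- Dyson series terms. -/
def dysonTerm (E : ℝ → 𝔸) : ℕ → ℝ → 𝔸
  | 0 => fun _ => 1
  | n + 1 => fun x => ∫ y in (0:ℝ)..x, E y * dysonTerm E n y

theorem dysonTerm_continuous {E : ℝ → 𝔸} (hE : Continuous E) (n : ℕ) :
    Continuous (dysonTerm E n) := by
  induction n with
  | zero => exact continuous_const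
  | succ n ih =>
    exact intervalIntegral.continuous_primitive
      (fun a b => (hE.mul ih).intervalIntegrable a b) 0

theorem dysonTerm_hasDerivAt {E : ℝ → 𝔸} (hE : Continuous E) (n : ℕ) (x : ℝ) :
    HasDerivAt (dysonTerm E (n+1)) (E x * dysonTerm E n x) x := by
  have hc := hE.mul (dysonTerm_continuous hE n)
  exact intervalIntegral.integral_hasDerivAt_right (hc.intervalIntegrable _ _)
    hc.stronglyMeasurable.stronglyMeasurableAtFilter hc.continuousAt

theorem dysonTerm_bound {E : ℝ → 𝔸} (hE : Continuous E) {K : ℝ} (hK : ∀ x, ‖E x‖ ≤ K) (n : ℕ)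
    (x : ℝ) : ‖dysonTerm E n x‖ ≤ ‖(1:𝔸)‖ * ((K * |x|) ^ n / n.factorial) := by
  have hK0 : 0 ≤ K := (norm_nonneg _).trans (hK 0)
  induction n generalizing x with
  | zero => simp [dysonTerm]
  | succ n ih =>
    have key : ∀ x : ℝ, 0 ≤ x → ∀ F : ℝ → 𝔸, Continuous F →
        (∀ y, 0 ≤ y → ‖F y‖ ≤ K * (‖(1:𝔸)‖ * ((K * y) ^ n / n.factorial))) →
        ‖∫ y in (0:ℝ)..x, F y‖ ≤ ‖(1:𝔸)‖ * ((K * x) ^ (n+1) / (n+1).factorial) := by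
      intro x hx F hF hb
      have h1 : ‖∫ y in (0:ℝ)..x, F y‖ ≤
          ∫ y in (0:ℝ)..x, K * (‖(1:𝔸)‖ * ((K * y) ^ n / n.factorial)) := by
        apply intervalIntegral.norm_integral_le_of_norm_le hx
        · exact ae_of_all _ fun y hy => hb y hy.1.le
        · exact Continuous.intervalIntegrable (by fun_prop) _ _
      refine h1.trans (le_of_eq ?_)
      have : (fun y : ℝ => K * (‖(1:𝔸)‖ * ((K * y) ^ n / n.factorial))) =
          fun y : ℝ => (K * (‖(1:𝔸)‖ * (K ^ n / n.factorial))) * y ^ n := by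
        funext y; rw [mul_pow]; ring
      rw [this, intervalIntegral.integral_const_mul, integral_pow, Nat.factorial_succ]
      push_cast
      have h2 : (n.factorial : ℝ) ≠ 0 := by positivity
      have h3 : ((n:ℝ) + 1) ≠ 0 := by positivity
      field_simp
      ring
    have hc := hE.mul (dysonTerm_continuous hE n)
    have hb : ∀ y, ‖E y * dysonTerm E n y‖ ≤
        K * (‖(1:𝔸)‖ * ((K * |y|) ^ n / n.factorial)) := fun y =>
      (norm_mul_le _ _).trans (mul_le_mul (hK y) (ih y) (norm_nonneg _) hK0)
    rcases le_total 0 x with hx | hx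
    · rw [abs_of_nonneg hx]
      refine key x hx _ hc fun y hy => ?_
      have := hb y
      rwa [abs_of_nonneg hy] at this
    · rw [abs_of_nonpos hx]
      have h := key (-x) (by linarith) (fun y => E (-y) * dysonTerm E n (-y))
        (hc.comp continuous_neg) (fun y hy => by
          have := hb (-y)
          rwa [abs_neg, abs_of_nonneg hy] at this)
      have e : dysonTerm E (n+1) x = - ∫ y in (0:ℝ)..(-x), E (-y) * dysonTerm E n (-y) := by
        rw [intervalIntegral.integral_comp_neg (fun y => E y * dysonTerm E n y)]
        simp only [neg_neg, neg_zero]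
        rw [← intervalIntegral.integral_symm]
        rfl
      rw [e, norm_neg]
      exact h

theorem linODE_exists {E : ℝ → 𝔸} (hE : Continuous E) {K : ℝ} (hK : ∀ x, ‖E x‖ ≤ K) :
    ∃ Y : ℝ → 𝔸, Y 0 = 1 ∧ (∀ x, HasDerivAt Y (E x * Y x) x) ∧
      ∀ x, ‖Y x‖ ≤ ‖(1:𝔸)‖ * Real.exp (K * |x|) := by
  have hK0 : 0 ≤ K := (norm_nonneg _).trans (hK 0)
  have hexp : ∀ r : ℝ, HasSum (fun n : ℕ => ‖(1:𝔸)‖ * (r ^ n / n.factorial))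
      (‖(1:𝔸)‖ * Real.exp r) := fun r => by
    have := NormedSpace.expSeries_div_hasSum_exp (𝔸 := ℝ) r
    rw [← Real.exp_eq_exp_ℝ] at this
    exact this.mul_left _
  have hsum : ∀ x, Summable (fun n => dysonTerm E n x) := fun x =>
    Summable.of_norm_bounded (hexp (K * |x|)).summable (fun n => dysonTerm_bound hE hK n x)
  refine ⟨fun x => ∑' n, dysonTerm E n x, ?_, ?_, ?_⟩
  · show ∑' n, dysonTerm E n 0 = 1
    rw [tsum_eq_single 0]
    · rfl
    · intro n hn
      obtain ⟨k, rfl⟩ := Nat.exists_eq_succ_of_ne_zero hn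
      simp [dysonTerm]
  · intro x
    have h := hasDerivAt_tsum_of_isPreconnected (t := ball (0:ℝ) (|x|+1)) (y₀ := x) (y := x)
      (g := fun n => dysonTerm E (n+1)) (g' := fun n y => E y * dysonTerm E n y)
      (u := fun n => K * (‖(1:𝔸)‖ * ((K * (|x|+1)) ^ n / n.factorial)))
      ((hexp _).summable.mul_left _) isOpen_ball (convex_ball _ _).isPreconnected
      (fun n y _ => dysonTerm_hasDerivAt hE n y)
      (fun n y hy => by
        refine (norm_mul_le _ _).trans (mul_le_mul (hK y) ?_ (norm_nonneg _) hK0)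
        refine (dysonTerm_bound hE hK n y).trans ?_
        have : |y| ≤ |x| + 1 := by
          have := mem_ball_zero_iff.1 hy
          exact this.le
        gcongr)
      (by simp) ((summable_nat_add_iff 1).2 (hsum x)) (by simp)
    rw [(hsum x).tsum_mul_left] at h
    have e : (fun x => ∑' n, dysonTerm E n x) = fun x => 1 + ∑' n, dysonTerm E (n+1) x := by
      funext y
      rw [(hsum y).tsum_eq_zero_add]
      rfl
    have h2 := h.const_add 1
    rw [← e] at h2
    exact h2
  · intro x
    exact tsum_of_norm_bounded (hexp _) (fun n => dysonTerm_bound hE hK n x)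

theorem linODE_unique {E : ℝ → 𝔸} {K : ℝ} (hK : ∀ x, ‖E x‖ ≤ K) {f g : ℝ → 𝔸}
    (hf : ∀ x, HasDerivAt f (E x * f x) x) (hg : ∀ x, HasDerivAt g (E x * g x) x)
    (h0 : f 0 = g 0) : f = g := by
  have hK0 : 0 ≤ K := (norm_nonneg _).trans (hK 0)
  refine ODE_solution_unique_univ (v := fun x y => E x * y) (s := fun _ => univ)
    (K := ⟨K, hK0⟩) (t₀ := 0) ?_ (fun t => ⟨hf t, mem_univ _⟩) (fun t => ⟨hg t, mem_univ _⟩) h0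
  intro t
  apply LipschitzOnWith.of_dist_le_mul
  intro a _ b _
  rw [dist_eq_norm, dist_eq_norm, ← mul_sub]
  exact (norm_mul_le _ _).trans (mul_le_mul_of_nonneg_right (hK t) (norm_nonneg _))

theorem linODE_approx {E : ℝ → 𝔸} (hE : Continuous E) {K : ℝ} (hK : ∀ x, ‖E x‖ ≤ K)
    {Y : ℝ → 𝔸} (h0 : Y 0 = 1) (hY : ∀ x, HasDerivAt Y (E x * Y x) x)
    (hb : ∀ x, ‖Y x‖ ≤ ‖(1:𝔸)‖ * Real.exp (K * |x|)) {R : ℝ} (hR : 0 ≤ R) :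
    ‖Y R - 1 - ∫ x in (0:ℝ)..R, E x‖ ≤ (K * R) ^ 2 * (‖(1:𝔸)‖ * Real.exp (K * R)) := by
  have hK0 : 0 ≤ K := (norm_nonneg _).trans (hK 0)
  have hYc : Continuous Y := continuous_iff_continuousAt.2 fun x => (hY x).continuousAt
  have hc : Continuous fun x => E x * Y x := hE.mul hYc
  have hint : ∀ x, Y x - 1 = ∫ y in (0:ℝ)..x, E y * Y y := fun x => by
    rw [intervalIntegral.integral_eq_sub_of_hasDerivAt (fun y _ => hY y)
      (hc.intervalIntegrable _ _), h0]
  have hB : ∀ x, 0 ≤ x → x ≤ R → ‖Y x - 1‖ ≤ K * (‖(1:𝔸)‖ * Real.exp (K * R)) * R := by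
    intro x hx hxR
    rw [hint]
    refine (intervalIntegral.norm_integral_le_of_norm_le_const
      (C := K * (‖(1:𝔸)‖ * Real.exp (K * R))) ?_).trans ?_
    · intro y hy
      rw [uIoc_of_le hx] at hy
      refine (norm_mul_le _ _).trans (mul_le_mul (hK y) ((hb y).trans ?_) (norm_nonneg _) hK0)
      have : |y| ≤ R := by rw [abs_of_pos hy.1]; exact hy.2.trans hxR
      gcongr
    · rw [sub_zero, abs_of_nonneg hx]
      gcongr
  have e : Y R - 1 - ∫ x in (0:ℝ)..R, E x = ∫ x in (0:ℝ)..R, E x * (Y x - 1) := by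
    rw [hint, ← intervalIntegral.integral_sub (hc.intervalIntegrable _ _)
      (hE.intervalIntegrable _ _)]
    congr 1; funext x; rw [mul_sub, mul_one]
  rw [e]
  refine (intervalIntegral.norm_integral_le_of_norm_le_const
      (C := K * (K * (‖(1:𝔸)‖ * Real.exp (K * R)) * R)) ?_).trans ?_
  · intro y hy
    rw [uIoc_of_le hR] at hy
    exact (norm_mul_le _ _).trans (mul_le_mul (hK y) (hB y hy.1.le hy.2) (norm_nonneg _) hK0)
  · rw [sub_zero, abs_of_nonneg hR]
    apply le_of_eq; ring

theorem hasDerivAt_comp_neg' {V : Type*} [NormedAddCommGroup V] [NormedSpace ℝ V] {f : ℝ → V}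
    {f' : V} {x : ℝ} (h : HasDerivAt f f' (-x)) : HasDerivAt (fun x => f (-x)) (-f') x := by
  have := h.scomp x (hasDerivAt_neg x)
  simp only [neg_smul, one_smul] at this
  exact this

end LinODE


section Transfer

set_option linter.unusedSimpArgs false

attribute [local instance] Matrix.linftyOpNormedRing Matrix.linftyOpNormedAlgebra

variable {m : ℕ}

def Pa (Q : ℝ → Matrix (Fin m) (Fin m) ℂ) (x : ℝ) : Matrix (Fin m ⊕ Fin m) (Fin m ⊕ Fin m) ℂ :=
  Matrix.fromBlocks (Q x) 0 0 (-(Q x))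
def Pb (Q : ℝ → Matrix (Fin m) (Fin m) ℂ) (x : ℝ) : Matrix (Fin m ⊕ Fin m) (Fin m ⊕ Fin m) ℂ :=
  Matrix.fromBlocks 0 (Q x) 0 0
def Pc (Q : ℝ → Matrix (Fin m) (Fin m) ℂ) (x : ℝ) : Matrix (Fin m ⊕ Fin m) (Fin m ⊕ Fin m) ℂ :=
  Matrix.fromBlocks 0 0 (-(Q x)) 0

def Cm (Q : ℝ → Matrix (Fin m) (Fin m) ℂ) (s x : ℝ) :
    Matrix (Fin m ⊕ Fin m) (Fin m ⊕ Fin m) ℂ :=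
  Pa Q x + (Complex.exp (((-(2 * s * x) : ℝ) : ℂ) * Complex.I) • Pb Q x +
    Complex.exp (((2 * s * x : ℝ) : ℂ) * Complex.I) • Pc Q x)

def Em (Q : ℝ → Matrix (Fin m) (Fin m) ℂ) (s x : ℝ) :
    Matrix (Fin m ⊕ Fin m) (Fin m ⊕ Fin m) ℂ :=
  ((2 * Complex.I * s)⁻¹ : ℂ) • Cm Q s x

def Dm (m : ℕ) (s : ℝ) : Matrix (Fin m ⊕ Fin m) (Fin m ⊕ Fin m) ℂ :=
  Matrix.fromBlocks (Complex.exp (((Real.pi * s : ℝ) : ℂ) * Complex.I) • 1) 0 0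
    (Complex.exp (((-(Real.pi * s) : ℝ) : ℂ) * Complex.I) • 1)

theorem Pa_cont {Q : ℝ → Matrix (Fin m) (Fin m) ℂ} (hQ : Continuous Q) : Continuous (Pa Q) :=
  Continuous.matrix_fromBlocks hQ continuous_const continuous_const hQ.neg
theorem Pb_cont {Q : ℝ → Matrix (Fin m) (Fin m) ℂ} (hQ : Continuous Q) : Continuous (Pb Q) :=
  Continuous.matrix_fromBlocks continuous_const hQ continuous_const continuous_const
theorem Pc_cont {Q : ℝ → Matrix (Fin m) (Fin m) ℂ} (hQ : Continuous Q) : Continuous (Pc Q) :=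
  Continuous.matrix_fromBlocks continuous_const continuous_const hQ.neg continuous_const

theorem per_bdd {V : Type*} [NormedAddCommGroup V] {f : ℝ → V} (hf : Continuous f)
    (hp : ∀ x, f (x + Real.pi) = f x) : ∃ K, ∀ x, ‖f x‖ ≤ K := by
  have hper : Function.Periodic f Real.pi := hp
  obtain ⟨K, hK⟩ := (isCompact_Icc (a := (0:ℝ)) (b := 0 + Real.pi)).exists_bound_of_continuousOn
    hf.continuousOn
  refine ⟨K, fun x => ?_⟩
  obtain ⟨y, hy, hxy⟩ := hper.exists_mem_Ico Real.pi_pos x 0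
  rw [hxy]
  exact hK y ⟨hy.1, hy.2.le⟩

theorem Cm_cont {Q : ℝ → Matrix (Fin m) (Fin m) ℂ} (hQ : Continuous Q) (s : ℝ) :
    Continuous (Cm Q s) := by
  have h1 : Continuous fun x : ℝ => Complex.exp (((-(2 * s * x) : ℝ) : ℂ) * Complex.I) := by
    fun_prop
  have h2 : Continuous fun x : ℝ => Complex.exp (((2 * s * x : ℝ) : ℂ) * Complex.I) := by
    fun_prop
  exact (Pa_cont hQ).add ((h1.smul (Pb_cont hQ)).add (h2.smul (Pc_cont hQ)))

theorem Cm_bdd {Q : ℝ → Matrix (Fin m) (Fin m) ℂ} (hQ : Continuous Q)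
    (hp : ∀ x, Q (x + Real.pi) = Q x) : ∃ K, ∀ s x, ‖Cm Q s x‖ ≤ K := by
  obtain ⟨K1, h1⟩ := per_bdd (Pa_cont hQ) (fun x => by simp [Pa, hp])
  obtain ⟨K2, h2⟩ := per_bdd (Pb_cont hQ) (fun x => by simp [Pb, hp])
  obtain ⟨K3, h3⟩ := per_bdd (Pc_cont hQ) (fun x => by simp [Pc, hp])
  refine ⟨K1 + (K2 + K3), fun s x => ?_⟩
  unfold Cm
  refine (norm_add_le _ _).trans (add_le_add (h1 x) ((norm_add_le _ _).trans (add_le_add ?_ ?_)))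
  · rw [norm_smul, Complex.norm_exp_ofReal_mul_I, one_mul]; exact h2 x
  · rw [norm_smul, Complex.norm_exp_ofReal_mul_I, one_mul]; exact h3 x

theorem Em_cont {Q : ℝ → Matrix (Fin m) (Fin m) ℂ} (hQ : Continuous Q) (s : ℝ) :
    Continuous (Em Q s) := by
  have h := (continuous_const (y := ((2 * Complex.I * s)⁻¹ : ℂ))).smul (Cm_cont hQ s)
  exact h

theorem Em_eq (Q : ℝ → Matrix (Fin m) (Fin m) ℂ) (s x : ℝ) :
    Em Q s x = ((2 * Complex.I * s)⁻¹ : ℂ) • Matrix.fromBlocks (Q x)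
      (Complex.exp (((-(2 * s * x) : ℝ) : ℂ) * Complex.I) • Q x)
      (-(Complex.exp (((2 * s * x : ℝ) : ℂ) * Complex.I) • Q x)) (-(Q x)) := by
  unfold Em Cm Pa Pb Pc
  rw [Matrix.fromBlocks_smul, Matrix.fromBlocks_smul, Matrix.fromBlocks_add,
    Matrix.fromBlocks_add]
  simp

theorem Em_conj {Q : ℝ → Matrix (Fin m) (Fin m) ℂ}
    (hPT : ∀ (x : ℝ) (i j : Fin m), (starRingEnd ℂ) (Q (-x) i j) = Q x i j) (s x : ℝ) :
    (Em Q s (-x)).map (starRingEnd ℂ) = - Em Q s x := by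
  rw [Em_eq, Em_eq]
  ext i j
  rcases i with i | i <;> rcases j with j | j <;>
    simp [Matrix.fromBlocks, hPT, ← Complex.exp_conj, Complex.conj_ofNat]

theorem Em_per {Q : ℝ → Matrix (Fin m) (Fin m) ℂ}
    (hp : ∀ x, Q (x + Real.pi) = Q x) (s x : ℝ) :
    Dm m s * Em Q s (x + Real.pi) = Em Q s x * Dm m s := by
  rw [Em_eq, Em_eq, Dm, hp, Matrix.mul_smul, Matrix.smul_mul, Matrix.fromBlocks_multiply,
    Matrix.fromBlocks_multiply]
  congr 1
  simp only [Matrix.smul_mul, Matrix.one_mul, Matrix.mul_smul, Matrix.mul_one, Matrix.zero_mul,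
    Matrix.mul_zero, add_zero, zero_add, Matrix.neg_mul, Matrix.mul_neg, smul_neg, smul_smul,
    smul_zero, neg_zero, add_zero, zero_add, ← Complex.exp_add]
  congr 3 <;> push_cast <;> ring_nf

theorem Dm_mul_neg (s : ℝ) : Dm m s * Dm m (-s) = 1 := by
  rw [Dm, Dm, Matrix.fromBlocks_multiply]
  simp only [Matrix.smul_mul, Matrix.one_mul, Matrix.mul_smul, Matrix.mul_one, Matrix.zero_mul,
    Matrix.mul_zero, add_zero, zero_add, smul_zero, smul_smul, ← Complex.exp_add]
  rw [← Matrix.fromBlocks_one]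
  congr 1
  · rw [show (((Real.pi * -s : ℝ) : ℂ) * Complex.I + ((Real.pi * s : ℝ) : ℂ) * Complex.I) = 0 by
      push_cast; ring]
    simp
  · rw [show (((-(Real.pi * -s) : ℝ) : ℂ) * Complex.I +
      ((-(Real.pi * s) : ℝ) : ℂ) * Complex.I) = 0 by push_cast; ring]
    simp

theorem Dm_neg_mul (s : ℝ) : Dm m (-s) * Dm m s = 1 := by
  have := Dm_mul_neg (m := m) (-s)
  rwa [neg_neg] at this

/-- entrywise conjugation as a real-linear continuous map -/
def conjL (ι : Type*) [Fintype ι] : Matrix ι ι ℂ →L[ℝ] Matrix ι ι ℂ :=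
  LinearMap.toContinuousLinearMap
    { toFun := fun M => M.map (starRingEnd ℂ)
      map_add' := fun a b => by ext i j; simp
      map_smul' := fun a b => by ext i j; simp }

def entryL {ι : Type*} [Fintype ι] (i j : ι) : Matrix ι ι ℂ →L[ℝ] ℂ :=
  LinearMap.toContinuousLinearMap
    { toFun := fun M => M i j
      map_add' := fun a b => by simp
      map_smul' := fun a b => by simp }

theorem transfer_exists {Q : ℝ → Matrix (Fin m) (Fin m) ℂ} (hQ : Continuous Q)
    (hp : ∀ x, Q (x + Real.pi) = Q x)
    (hPT : ∀ (x : ℝ) (i j : Fin m), (starRingEnd ℂ) (Q (-x) i j) = Q x i j) :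
    ∃ C : ℝ, ∀ s : ℝ, 1 ≤ s → ∃ Y : ℝ → Matrix (Fin m ⊕ Fin m) (Fin m ⊕ Fin m) ℂ,
      Y 0 = 1 ∧ (∀ x i j, HasDerivAt (fun x => Y x i j) ((Em Q s x * Y x) i j) x) ∧
      (∀ x, Dm m s * Y (x + Real.pi) = Y x * (Dm m s * Y Real.pi)) ∧
      (Y Real.pi).map (starRingEnd ℂ) * Dm m s * Y Real.pi = Dm m s ∧
      ‖(2 * Complex.I * s : ℂ) • (Y Real.pi - 1) - ∫ x in (0:ℝ)..Real.pi, Cm Q s x‖ ≤ C / s := by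
  obtain ⟨K, hK⟩ := Cm_bdd hQ hp
  have hK0 : 0 ≤ K := (norm_nonneg _).trans (hK 0 0)
  refine ⟨2 * ((K * Real.pi) ^ 2 *
    (‖(1 : Matrix (Fin m ⊕ Fin m) (Fin m ⊕ Fin m) ℂ)‖ * Real.exp (K * Real.pi))),
    fun s hs => ?_⟩
  have hs0 : 0 < s := by linarith
  have hnorm : ‖(2 * Complex.I * s : ℂ)‖ = 2 * s := by
    simp [abs_of_pos hs0]
  have hne : (2 * Complex.I * s : ℂ) ≠ 0 := by
    rw [← norm_pos_iff, hnorm]; linarith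
  have hE : ∀ x, ‖Em Q s x‖ ≤ K / s := by
    intro x
    unfold Em
    rw [norm_smul, norm_inv, hnorm, div_eq_inv_mul]
    refine mul_le_mul ?_ (hK s x) (norm_nonneg _) (by positivity)
    exact inv_anti₀ hs0 (by linarith)
  have hEc := Em_cont hQ s
  obtain ⟨Y, h0, hY, hb⟩ := linODE_exists hEc hE
  have hper : ∀ x, Dm m s * Y (x + Real.pi) = Y x * (Dm m s * Y Real.pi) := by
    have := linODE_unique hE (f := fun x => Dm m s * Y (x + Real.pi))
      (g := fun x => Y x * (Dm m s * Y Real.pi)) ?_ ?_ ?_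
    · exact fun x => congrFun this x
    · intro x
      have h := ((hY (x + Real.pi)).comp_add_const x Real.pi).const_mul (Dm m s)
      refine h.congr_deriv ?_
      rw [← mul_assoc, Em_per hp, mul_assoc]
    · intro x
      have h := (hY x).mul_const (Dm m s * Y Real.pi)
      refine h.congr_deriv ?_
      rw [mul_assoc]
    · simp [h0]
  have hconj : ∀ x, (Y (-x)).map (starRingEnd ℂ) = Y x := by
    have := linODE_unique hE (f := fun x => conjL _ (Y (-x))) (g := Y) ?_ hY ?_
    · exact fun x => congrFun this x
    · intro x
      have h1 : HasDerivAt (fun x => Y (-x)) (-(Em Q s (-x) * Y (-x))) x := hasDerivAt_comp_neg' (hY (-x))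
      have h2 := (conjL (Fin m ⊕ Fin m)).hasFDerivAt.comp_hasDerivAt x h1
      refine h2.congr_deriv ?_
      have h3 : (-(Em Q s (-x) * Y (-x))).map (starRingEnd ℂ) =
        Em Q s x * (Y (-x)).map (starRingEnd ℂ) := by
          rw [← neg_mul, Matrix.map_mul, ← neg_neg (Em Q s x), ← Em_conj hPT]
          congr 1
          ext i j
          simp
      exact h3
    · show (Y (-0)).map (starRingEnd ℂ) = Y 0
      rw [neg_zero, h0]; simp
  refine ⟨Y, h0, ?_, hper, ?_, ?_⟩
  · intro x i j
    exact (entryL i j).hasFDerivAt.comp_hasDerivAt x (hY x)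
  · have h1 := hper (-Real.pi)
    rw [neg_add_cancel, h0, mul_one] at h1
    have h2 := hconj (-Real.pi)
    rw [neg_neg] at h2
    rw [h2, mul_assoc, ← h1]
  · have h := linODE_approx hEc hE h0 hY hb Real.pi_pos.le
    have e : (2 * Complex.I * s : ℂ) • (Y Real.pi - 1) - ∫ x in (0:ℝ)..Real.pi, Cm Q s x =
        (2 * Complex.I * s : ℂ) • (Y Real.pi - 1 - ∫ x in (0:ℝ)..Real.pi, Em Q s x) := by
      rw [smul_sub _ (Y Real.pi - 1)]
      congr 1
      unfold Em
      rw [intervalIntegral.integral_smul, smul_smul, mul_inv_cancel₀ hne, one_smul]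
    rw [e, norm_smul, hnorm]
    have hKs : K / s ≤ K := div_le_self hK0 hs
    calc 2 * s * ‖Y Real.pi - 1 - ∫ x in (0:ℝ)..Real.pi, Em Q s x‖
        ≤ 2 * s * ((K / s * Real.pi) ^ 2 *
          (‖(1 : Matrix (Fin m ⊕ Fin m) (Fin m ⊕ Fin m) ℂ)‖ * Real.exp (K * Real.pi))) := by
          refine mul_le_mul_of_nonneg_left (h.trans ?_) (by positivity)
          have := Real.pi_pos
          gcongr
      _ = _ := by
          field_simp

end Transfer


section Bloch

set_option linter.unusedSimpArgs false

variable {m : ℕ}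

theorem bloch_of_det {Q : ℝ → Matrix (Fin m) (Fin m) ℂ} (hQ : Continuous Q)
    {s : ℝ} (hs : 1 ≤ s) {Y : ℝ → Matrix (Fin m ⊕ Fin m) (Fin m ⊕ Fin m) ℂ} (h0 : Y 0 = 1)
    (hY : ∀ x i j, HasDerivAt (fun x => Y x i j) ((Em Q s x * Y x) i j) x)
    (hper : ∀ x, Dm m s * Y (x + Real.pi) = Y x * (Dm m s * Y Real.pi)) (t : ℝ)
    (hdet : (Dm m s * Y Real.pi - blochPhase t • 1).det = 0) :
    IsBlochEigenvalue Q t ((s : ℂ) ^ 2) := by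
  have hsne : (s : ℂ) ≠ 0 := by
    have : s ≠ 0 := by linarith
    exact_mod_cast this
  have hI := Complex.I_ne_zero
  obtain ⟨w, hw0, hw⟩ := Matrix.exists_mulVec_eq_zero_iff.2 hdet
  rw [Matrix.sub_mulVec, sub_eq_zero, Matrix.smul_mulVec, Matrix.one_mulVec] at hw
  set W : ℝ → (Fin m ⊕ Fin m) → ℂ := fun x => (Y x).mulVec w with hW
  have hWd : ∀ x i, HasDerivAt (fun x => W x i) ((Em Q s x).mulVec (W x) i) x := by
    intro x i
    have h : HasDerivAt (fun x => ∑ j, Y x i j * w j) (∑ j, (Em Q s x * Y x) i j * w j) x :=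
      HasDerivAt.fun_sum fun j _ => (hY x i j).mul_const (w j)
    refine h.congr_deriv ?_
    rw [hW, Matrix.mulVec_mulVec]
    rfl
  have hWper : ∀ x, (Dm m s).mulVec (W (x + Real.pi)) = blochPhase t • W x := by
    intro x
    rw [hW]
    simp only
    rw [Matrix.mulVec_mulVec, hper, ← Matrix.mulVec_mulVec, hw, Matrix.mulVec_smul]
  set e : ℝ → ℂ := fun x => Complex.exp (((s * x : ℝ) : ℂ) * Complex.I) with he
  set f : ℝ → ℂ := fun x => Complex.exp (((-(s * x) : ℝ) : ℂ) * Complex.I) with hf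
  have hef : ∀ x, e x * f x = 1 := by
    intro x
    rw [he, hf]
    simp only
    rw [← Complex.exp_add]
    push_cast
    rw [show ((s:ℂ) * x * Complex.I + -(s * x) * Complex.I) = 0 by ring, Complex.exp_zero]
  have hed : ∀ x, HasDerivAt e (e x * (s * Complex.I)) x := by
    intro x
    have h1 : HasDerivAt (fun x : ℝ => ((s * x : ℝ) : ℂ) * Complex.I) (s * Complex.I) x := by
      have := ((hasDerivAt_id x).const_mul s).ofReal_comp.mul_const Complex.I
      simpa using this
    exact h1.cexp
  have hfd : ∀ x, HasDerivAt f (f x * (-s * Complex.I)) x := by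
    intro x
    have h1 : HasDerivAt (fun x : ℝ => ((-(s * x) : ℝ) : ℂ) * Complex.I) (-s * Complex.I) x := by
      have := ((hasDerivAt_id x).const_mul s).neg.ofReal_comp.mul_const Complex.I
      simpa using this
    exact h1.cexp
  set u : ℝ → Fin m → ℂ := fun x i => W x (Sum.inl i) with hu
  set v : ℝ → Fin m → ℂ := fun x i => W x (Sum.inr i) with hv
  have hWuv : ∀ x, W x = Sum.elim (u x) (v x) := by
    intro x; ext i; rcases i with i | i <;> rfl
  have hud : ∀ x i, HasDerivAt (fun x => u x i)
      ((2 * Complex.I * s)⁻¹ * ((Q x).mulVec (u x) i + f x ^ 2 * (Q x).mulVec (v x) i)) x := by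
    intro x i
    refine (hWd x (Sum.inl i)).congr_deriv ?_
    rw [Em_eq, hWuv, Matrix.smul_mulVec, Matrix.fromBlocks_mulVec]
    simp only [Pi.smul_apply, Sum.elim_inl, Pi.add_apply, Matrix.smul_mulVec, smul_eq_mul,
      Sum.elim_comp_inl, Sum.elim_comp_inr]
    congr 3
    rw [hf, sq]
    simp only
    rw [← Complex.exp_add]
    congr 1; push_cast; ring
  have hvd : ∀ x i, HasDerivAt (fun x => v x i)
      ((2 * Complex.I * s)⁻¹ * (-(e x ^ 2 * (Q x).mulVec (u x) i) - (Q x).mulVec (v x) i)) x := by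
    intro x i
    refine (hWd x (Sum.inr i)).congr_deriv ?_
    rw [Em_eq, hWuv, Matrix.smul_mulVec, Matrix.fromBlocks_mulVec]
    simp only [Pi.smul_apply, Sum.elim_inr, Pi.add_apply, Matrix.smul_mulVec, smul_eq_mul,
      Sum.elim_comp_inl, Sum.elim_comp_inr, Matrix.neg_mulVec, Pi.neg_apply, sub_eq_add_neg]
    congr 4
    rw [he, sq]
    simp only
    rw [← Complex.exp_add]
    congr 1; push_cast; ring
  set Ψ : ℝ → Fin m → ℂ := fun x => e x • u x + f x • v x with hΨ
  set Φ : ℝ → Fin m → ℂ := fun x => (s * Complex.I) • (e x • u x - f x • v x) with hΦ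
  have hQΨ : ∀ x i, (Q x).mulVec (Ψ x) i =
      e x * (Q x).mulVec (u x) i + f x * (Q x).mulVec (v x) i := by
    intro x i
    rw [hΨ]
    simp only [Matrix.mulVec_add, Matrix.mulVec_smul, Pi.add_apply, Pi.smul_apply, smul_eq_mul]
  have hΨd : ∀ x, HasDerivAt Ψ (Φ x) x := by
    intro x
    rw [hasDerivAt_pi]
    intro i
    have h := ((hed x).mul (hud x i)).add ((hfd x).mul (hvd x i))
    refine h.congr_deriv ?_
    simp only [hΦ, Pi.smul_apply, Pi.sub_apply, smul_eq_mul]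
    linear_combination ((2 * Complex.I * s)⁻¹ * (f x * (Q x).mulVec (v x) i -
      e x * (Q x).mulVec (u x) i)) * hef x
  have hΦd : ∀ x, HasDerivAt Φ ((Q x).mulVec (Ψ x) - ((s:ℂ)^2) • Ψ x) x := by
    intro x
    rw [hasDerivAt_pi]
    intro i
    have h := (((hed x).mul (hud x i)).sub ((hfd x).mul (hvd x i))).const_mul (s * Complex.I)
    refine h.congr_deriv ?_
    rw [Pi.sub_apply, hQΨ]
    simp only [hΨ, Pi.smul_apply, Pi.add_apply, smul_eq_mul]
    have h2 : (s * Complex.I) * (2 * Complex.I * s)⁻¹ = 1 / 2 := by field_simp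
    have h3 := Complex.I_sq
    linear_combination (e x * (Q x).mulVec (u x) i + f x ^ 2 * e x * (Q x).mulVec (v x) i
      + f x * e x ^ 2 * (Q x).mulVec (u x) i + f x * (Q x).mulVec (v x) i) * h2
      + (1/2) * (f x * (Q x).mulVec (v x) i + e x * (Q x).mulVec (u x) i) * hef x
      + (s^2 * (e x * u x i + f x * v x i)) * h3
  have hdΨ : deriv Ψ = Φ := funext fun x => (hΨd x).deriv
  have hdΦ : deriv Φ = fun x => (Q x).mulVec (Ψ x) - ((s:ℂ)^2) • Ψ x :=
    funext fun x => (hΦd x).deriv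
  have hΨc : Continuous Ψ := continuous_iff_continuousAt.2 fun x => (hΨd x).continuousAt
  refine ⟨Ψ, ?_, ?_, ?_, ?_⟩
  · intro hz
    apply hw0
    have hΦ0 : Φ 0 = 0 := by
      rw [← hdΨ, hz]; simp
    have hΨ0 : Ψ 0 = 0 := by rw [hz]; rfl
    have hW0 : W 0 = w := by rw [hW]; simp [h0]
    have e0 : e 0 = 1 := by simp [he]
    have f0 : f 0 = 1 := by simp [hf]
    rw [hΨ] at hΨ0
    rw [hΦ] at hΦ0
    simp only [e0, f0, one_smul] at hΨ0 hΦ0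
    have h1 : u 0 - v 0 = 0 := (smul_eq_zero.1 hΦ0).resolve_left (mul_ne_zero hsne hI)
    rw [← hW0, hWuv]
    ext i
    rcases i with i | i
    · have a1 := congrFun hΨ0 i
      have a2 := congrFun h1 i
      simp only [Pi.add_apply, Pi.sub_apply, Pi.zero_apply] at a1 a2
      simp only [Sum.elim_inl, Pi.zero_apply]
      linear_combination (1/2) * a1 + (1/2) * a2
    · have a1 := congrFun hΨ0 i
      have a2 := congrFun h1 i
      simp only [Pi.add_apply, Pi.sub_apply, Pi.zero_apply] at a1 a2
      simp only [Sum.elim_inr, Pi.zero_apply]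
      linear_combination (1/2) * a1 - (1/2) * a2
  · rw [show (2 : WithTop ℕ∞) = 1 + 1 by norm_num, contDiff_succ_iff_deriv]
    refine ⟨fun x => (hΨd x).differentiableAt, by simp, ?_⟩
    rw [hdΨ, contDiff_one_iff_deriv]
    refine ⟨fun x => (hΦd x).differentiableAt, ?_⟩
    rw [hdΦ]
    have h2 : Continuous (((s:ℂ)^2) • Ψ) := hΨc.const_smul _
    exact (hQ.matrix_mulVec hΨc).sub h2
  · intro x
    rw [hdΨ, hdΦ]
    simp
  · intro x
    have h := hWper x
    rw [hWuv, hWuv x, Dm, Matrix.fromBlocks_mulVec] at h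
    ext i
    have a1 := congrFun h (Sum.inl i)
    have a2 := congrFun h (Sum.inr i)
    simp only [Pi.smul_apply, Sum.elim_inl, Sum.elim_inr, Pi.add_apply, Matrix.smul_mulVec,
      smul_eq_mul, Sum.elim_comp_inl, Sum.elim_comp_inr, Matrix.one_mulVec, Matrix.zero_mulVec,
      Pi.zero_apply, add_zero, zero_add] at a1 a2
    have b1 : e (x + Real.pi) = e x * Complex.exp (((Real.pi * s : ℝ) : ℂ) * Complex.I) := by
      rw [he]; simp only
      rw [← Complex.exp_add]; congr 1; push_cast; ring
    have b2 : f (x + Real.pi) = f x * Complex.exp (((-(Real.pi * s) : ℝ) : ℂ) * Complex.I) := by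
      rw [hf]; simp only
      rw [← Complex.exp_add]; congr 1; push_cast; ring
    simp only [hΨ, Pi.smul_apply, Pi.add_apply, smul_eq_mul, b1, b2]
    linear_combination e x * a1 + f x * a2

attribute [local instance] Matrix.linftyOpNormedRing Matrix.linftyOpNormedAlgebra

theorem RL_aux {V : Type*} [NormedAddCommGroup V] [NormedSpace ℂ V] (f : ℝ → V) :
    Tendsto (fun w : ℝ => ∫ x in (0:ℝ)..Real.pi,
      Complex.exp (((-(2 * w * x) : ℝ) : ℂ) * Complex.I) • f x) (cocompact ℝ) (𝓝 0) := by
  have h := Real.tendsto_integral_exp_smul_cocompact ((Ioc 0 Real.pi).indicator f)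
  have h2 : Tendsto (fun w : ℝ => w * Real.pi⁻¹) (cocompact ℝ) (cocompact ℝ) :=
    (Homeomorph.mulRight₀ (Real.pi⁻¹) (by positivity)).isClosedEmbedding.tendsto_cocompact
  refine (h.comp h2).congr fun w => ?_
  simp only [Function.comp]
  rw [intervalIntegral.integral_of_le Real.pi_pos.le, ← integral_indicator measurableSet_Ioc]
  congr 1
  funext x
  by_cases hx : x ∈ Ioc 0 Real.pi
  · rw [indicator_of_mem hx, indicator_of_mem hx, Circle.smul_def, Real.fourierChar_apply]
    congr 3
    have := Real.pi_ne_zero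
    push_cast
    have : (Real.pi : ℂ) ≠ 0 := by exact_mod_cast this
    field_simp
  · rw [indicator_of_notMem hx, indicator_of_notMem hx, smul_zero]

theorem Cm_int_tendsto {Q : ℝ → Matrix (Fin m) (Fin m) ℂ} (hQ : Continuous Q) :
    Tendsto (fun s : ℝ => ∫ x in (0:ℝ)..Real.pi, Cm Q s x) atTop
      (𝓝 (∫ x in (0:ℝ)..Real.pi, Pa Q x)) := by
  have h1 : Tendsto (fun s : ℝ => ∫ x in (0:ℝ)..Real.pi,
      Complex.exp (((-(2 * s * x) : ℝ) : ℂ) * Complex.I) • Pb Q x) atTop (𝓝 0) :=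
    (RL_aux (Pb Q)).mono_left atTop_le_cocompact
  have h2 : Tendsto (fun s : ℝ => ∫ x in (0:ℝ)..Real.pi,
      Complex.exp (((2 * s * x : ℝ) : ℂ) * Complex.I) • Pc Q x) atTop (𝓝 0) := by
    have := ((RL_aux (Pc Q)).mono_left atBot_le_cocompact).comp tendsto_neg_atTop_atBot
    refine this.congr fun s => ?_
    simp only [Function.comp]
    congr 1; funext x; congr 4; ring
  have h3 := tendsto_const_nhds (x := ∫ x in (0:ℝ)..Real.pi, Pa Q x) (f := (atTop : Filter ℝ))
  have h4 := h3.add (h1.add h2)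
  rw [add_zero, add_zero] at h4
  refine h4.congr fun s => ?_
  have c1 : Continuous fun x : ℝ => Complex.exp (((-(2 * s * x) : ℝ) : ℂ) * Complex.I) := by
    fun_prop
  have c2 : Continuous fun x : ℝ => Complex.exp (((2 * s * x : ℝ) : ℂ) * Complex.I) := by
    fun_prop
  have d1 : Continuous fun x : ℝ => Complex.exp (((-(2 * s * x) : ℝ) : ℂ) * Complex.I) • Pb Q x :=
    c1.smul (Pb_cont hQ)
  have d2 : Continuous fun x : ℝ => Complex.exp (((2 * s * x : ℝ) : ℂ) * Complex.I) • Pc Q x :=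
    c2.smul (Pc_cont hQ)
  have d3 : Continuous fun x : ℝ => Complex.exp (((-(2 * s * x) : ℝ) : ℂ) * Complex.I) • Pb Q x +
      Complex.exp (((2 * s * x : ℝ) : ℂ) * Complex.I) • Pc Q x := d1.add d2
  unfold Cm
  rw [intervalIntegral.integral_add ((Pa_cont hQ).intervalIntegrable _ _)
    (d3.intervalIntegrable _ _),
    intervalIntegral.integral_add (d1.intervalIntegrable _ _) (d2.intervalIntegrable _ _)]

theorem Pa_int {Q : ℝ → Matrix (Fin m) (Fin m) ℂ} (hQ : Continuous Q) :
    (∫ x in (0:ℝ)..Real.pi, Pa Q x) = Matrix.fromBlocks (meanMatrix Q) 0 0 (-(meanMatrix Q)) := by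
  have h : ∀ i j, (∫ x in (0:ℝ)..Real.pi, Pa Q x) i j = ∫ x in (0:ℝ)..Real.pi, Pa Q x i j :=
    fun i j => ((entryL i j).intervalIntegral_comp_comm
      ((Pa_cont hQ).intervalIntegrable 0 Real.pi)).symm
  ext i j
  rw [h]
  rcases i with i | i <;> rcases j with j | j <;>
    simp [Pa, meanMatrix, intervalIntegral.integral_neg]

theorem transfer_tendsto {Q : ℝ → Matrix (Fin m) (Fin m) ℂ} (hQ : Continuous Q)
    {T : ℝ → Matrix (Fin m ⊕ Fin m) (Fin m ⊕ Fin m) ℂ} {C : ℝ}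
    (hT : ∀ s : ℝ, 1 ≤ s →
      ‖(2 * Complex.I * s : ℂ) • (T s - 1) - ∫ x in (0:ℝ)..Real.pi, Cm Q s x‖ ≤ C / s) :
    Tendsto (fun s : ℝ => (2 * Complex.I * s : ℂ) • (T s - 1)) atTop
      (𝓝 (Matrix.fromBlocks (meanMatrix Q) 0 0 (-(meanMatrix Q)))) := by
  rw [← Pa_int hQ]
  have h1 : Tendsto (fun s : ℝ => (2 * Complex.I * s : ℂ) • (T s - 1) -
      ∫ x in (0:ℝ)..Real.pi, Cm Q s x) atTop (𝓝 0) := by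
    refine squeeze_zero_norm' (a := fun s => C / s) ?_ (tendsto_const_nhds.div_atTop tendsto_id)
    filter_upwards [eventually_ge_atTop 1] with s hs using hT s hs
  have h2 := h1.add (Cm_int_tendsto hQ)
  rw [zero_add] at h2
  refine h2.congr fun s => ?_
  rw [sub_add_cancel]

end Bloch

theorem transfer_family {m : ℕ} {Q : ℝ → Matrix (Fin m) (Fin m) ℂ} (hQ : Continuous Q)
    (hp : ∀ x, Q (x + Real.pi) = Q x)
    (hPT : ∀ (x : ℝ) (i j : Fin m), (starRingEnd ℂ) (Q (-x) i j) = Q x i j) :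
    ∃ T : ℝ → Matrix (Fin m ⊕ Fin m) (Fin m ⊕ Fin m) ℂ,
      (∀ s, 1 ≤ s → (T s).map (starRingEnd ℂ) * Dm m s * T s = Dm m s) ∧
      (∀ s, 1 ≤ s → ∀ t : ℝ, (Dm m s * T s - blochPhase t • 1).det = 0 →
        IsBlochEigenvalue Q t ((s : ℂ) ^ 2)) ∧
      Tendsto (fun s : ℝ => (2 * Complex.I * s : ℂ) • (T s - 1)) atTop
        (𝓝 (Matrix.fromBlocks (meanMatrix Q) 0 0 (-(meanMatrix Q)))) := by
  obtain ⟨C, hC⟩ := transfer_exists hQ hp hPT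
  choose! Y h0 hY hper hconj hb using hC
  refine ⟨fun s => Y s Real.pi, hconj, fun s hs t ht => ?_, ?_⟩
  · exact bloch_of_det hQ hs (h0 s hs) (hY s hs) (hper s hs) t ht
  · exact transfer_tendsto hQ hb


section DetAsymp

set_option linter.unusedSimpArgs false

variable {m : ℕ}

def hh (s : ℝ) : ℝ := 1 + |4 * s * Real.sin (Real.pi * s)|

theorem hh_pos (s : ℝ) : 0 < hh s := by unfold hh; positivity

def zk (s κ : ℝ) : ℂ := Complex.exp (((Real.pi * s - κ / (2 * s) : ℝ) : ℂ) * Complex.I)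

def Lm (m : ℕ) (s κ : ℝ) : Matrix (Fin m ⊕ Fin m) (Fin m ⊕ Fin m) ℂ :=
  Matrix.fromBlocks
    ((2 * Complex.I * s * Complex.exp (((-(Real.pi * s) + κ / (4 * s) : ℝ) : ℂ) * Complex.I)) • 1)
    0 0
    ((2 * Complex.I * s * (hh s : ℂ)⁻¹ * Complex.exp (((κ / (4 * s) : ℝ) : ℂ) * Complex.I)) • 1)

def Hd (T : Matrix (Fin m ⊕ Fin m) (Fin m ⊕ Fin m) ℂ) (s κ : ℝ) : ℂ :=
  (Lm m s κ * (Dm m s * T - zk s κ • 1)).det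

def Fm (m : ℕ) (s κ : ℝ) : Matrix (Fin m ⊕ Fin m) (Fin m ⊕ Fin m) ℂ :=
  Matrix.fromBlocks (Complex.exp (((κ / (4 * s) : ℝ) : ℂ) * Complex.I) • 1) 0 0
    (((hh s : ℂ)⁻¹ * Complex.exp (((-(Real.pi * s) + κ / (4 * s) : ℝ) : ℂ) * Complex.I)) • 1)

def Gm (m : ℕ) (s κ : ℝ) : Matrix (Fin m ⊕ Fin m) (Fin m ⊕ Fin m) ℂ :=
  Matrix.fromBlocks (((-(4 * s * Real.sin (κ / (4 * s))) : ℝ) : ℂ) • 1) 0 0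
    ((((hh s)⁻¹ * (4 * s * Real.sin (Real.pi * s - κ / (4 * s))) : ℝ) : ℂ) • 1)

theorem sin_exp_aux (y : ℝ) : Complex.exp ((y:ℂ) * Complex.I) - Complex.exp (((-y : ℝ):ℂ) * Complex.I)
    = 2 * Complex.I * (Real.sin y : ℂ) := by
  rw [Complex.exp_mul_I, Complex.exp_mul_I]
  push_cast
  rw [Complex.cos_neg, Complex.sin_neg]
  ring

theorem Lm_mul_Dm (s κ : ℝ) : Lm m s κ * Dm m s = (2 * Complex.I * s : ℂ) • Fm m s κ := by
  rw [Lm, Dm, Fm, Matrix.fromBlocks_multiply, Matrix.fromBlocks_smul]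
  simp only [Matrix.smul_mul, Matrix.one_mul, Matrix.mul_smul, Matrix.mul_one, Matrix.zero_mul,
    Matrix.mul_zero, add_zero, zero_add, smul_zero, smul_smul]
  congr 2
  · rw [mul_comm, mul_assoc, ← Complex.exp_add]
    congr 2; push_cast; ring
  · rw [mul_comm, mul_assoc, mul_assoc, ← Complex.exp_add]
    congr 3; push_cast; ring

theorem Lm_mul_sub {s : ℝ} (hs : 0 < s) (κ : ℝ) :
    Lm m s κ * (Dm m s - zk s κ • 1) = Gm m s κ := by
  have h0 : Lm m s κ * (zk s κ • 1) = zk s κ • Lm m s κ := by rw [Matrix.mul_smul, mul_one]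
  rw [mul_sub, h0, Lm, Dm, Gm, Matrix.fromBlocks_multiply,
    Matrix.fromBlocks_smul, sub_eq_add_neg, Matrix.fromBlocks_neg, Matrix.fromBlocks_add]
  simp only [Matrix.smul_mul, Matrix.one_mul, Matrix.mul_smul, Matrix.mul_one, Matrix.zero_mul,
    Matrix.mul_zero, add_zero, zero_add, smul_zero, smul_smul, ← sub_eq_add_neg, ← sub_smul, sub_zero]
  have hs' : (s:ℂ) ≠ 0 := by exact_mod_cast hs.ne'
  have hI := Complex.I_sq
  congr 2
  · have h1 : Complex.exp (((Real.pi * s : ℝ) : ℂ) * Complex.I) *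
        Complex.exp (((-(Real.pi * s) + κ / (4 * s) : ℝ) : ℂ) * Complex.I) =
        Complex.exp (((κ / (4 * s) : ℝ) : ℂ) * Complex.I) := by
      rw [← Complex.exp_add]; congr 1; push_cast; ring
    have h2 : zk s κ * Complex.exp (((-(Real.pi * s) + κ / (4 * s) : ℝ) : ℂ) * Complex.I) =
        Complex.exp (((-(κ / (4 * s)) : ℝ) : ℂ) * Complex.I) := by
      rw [zk, ← Complex.exp_add]; congr 1; push_cast; field_simp; ring
    have h3 := sin_exp_aux (κ / (4 * s))
    push_cast at h1 h2 h3 ⊢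
    linear_combination (2 * Complex.I * s) * (h1 - h2 + h3)
      + 4 * s * Complex.sin (κ / (4 * s)) * hI
  · have h1 : Complex.exp (((-(Real.pi * s) : ℝ) : ℂ) * Complex.I) *
        Complex.exp (((κ / (4 * s) : ℝ) : ℂ) * Complex.I) =
        Complex.exp (((-(Real.pi * s - κ / (4 * s)) : ℝ) : ℂ) * Complex.I) := by
      rw [← Complex.exp_add]; congr 1; push_cast; ring
    have h2 : zk s κ * Complex.exp (((κ / (4 * s) : ℝ) : ℂ) * Complex.I) =
        Complex.exp (((Real.pi * s - κ / (4 * s) : ℝ) : ℂ) * Complex.I) := by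
      rw [zk, ← Complex.exp_add]; congr 1; push_cast; field_simp; ring
    have h3 := sin_exp_aux (Real.pi * s - κ / (4 * s))
    push_cast at h1 h2 h3 ⊢
    linear_combination (2 * Complex.I * s * (hh s : ℂ)⁻¹) * (h1 - h2 - h3)
      - 4 * s * (hh s : ℂ)⁻¹ * Complex.sin (Real.pi * s - κ / (4 * s)) * hI

theorem Hd_eq (T : Matrix (Fin m ⊕ Fin m) (Fin m ⊕ Fin m) ℂ) {s : ℝ} (hs : 0 < s) (κ : ℝ) :
    Hd T s κ = (Fm m s κ * ((2 * Complex.I * s : ℂ) • (T - 1)) + Gm m s κ).det := by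
  unfold Hd
  congr 1
  rw [← Lm_mul_sub hs, Matrix.mul_smul, ← Matrix.smul_mul, ← Lm_mul_Dm]
  noncomm_ring

theorem sin_tendsto {s : ℕ → ℝ} (hs : Tendsto s atTop atTop) (κ : ℝ) :
    Tendsto (fun n => 4 * s n * Real.sin (κ / (4 * s n))) atTop (𝓝 κ) := by
  have h0 : Tendsto (fun n => κ / (4 * s n)) atTop (𝓝 0) :=
    tendsto_const_nhds.div_atTop (hs.const_mul_atTop (by norm_num))
  have h1 : Tendsto (fun n => κ * Real.sinc (κ / (4 * s n))) atTop (𝓝 (κ * Real.sinc 0)) :=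
    ((Real.continuous_sinc.tendsto 0).comp h0).const_mul κ
  rw [Real.sinc_zero, mul_one] at h1
  refine h1.congr' ?_
  filter_upwards [hs.eventually_gt_atTop 0] with n hn
  by_cases hκ : κ = 0
  · simp [hκ]
  · rw [Real.sinc_of_ne_zero (by positivity)]
    field_simp

theorem blk_tendsto {a b : ℕ → ℂ} {a0 b0 : ℂ} (ha : Tendsto a atTop (𝓝 a0))
    (hb : Tendsto b atTop (𝓝 b0)) :
    Tendsto (fun n => (Matrix.fromBlocks (a n • 1) 0 0 (b n • 1) :
        Matrix (Fin m ⊕ Fin m) (Fin m ⊕ Fin m) ℂ)) atTop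
      (𝓝 (Matrix.fromBlocks (a0 • 1) 0 0 (b0 • 1))) := by
  have c : Continuous fun y : ℂ × ℂ => (Matrix.fromBlocks (y.1 • 1) 0 0 (y.2 • 1) :
        Matrix (Fin m ⊕ Fin m) (Fin m ⊕ Fin m) ℂ) :=
      Continuous.matrix_fromBlocks (continuous_fst.smul continuous_const) continuous_const
        continuous_const (continuous_snd.smul continuous_const)
  have h := ha.prodMk_nhds hb
  have h2 := (c.tendsto (a0, b0)).comp h
  simp only [Function.comp_def] at h2
  exact h2

theorem Hd_tendsto {A : Matrix (Fin m) (Fin m) ℂ}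
    {T : ℝ → Matrix (Fin m ⊕ Fin m) (Fin m ⊕ Fin m) ℂ}
    (hT : Tendsto (fun s : ℝ => (2 * Complex.I * s : ℂ) • (T s - 1)) atTop
        (𝓝 (Matrix.fromBlocks A 0 0 (-A)))) {s : ℕ → ℝ} (hs : Tendsto s atTop atTop) {p q : ℝ}
    (hp : Tendsto (fun n => (hh (s n))⁻¹ * (4 * s n * Real.sin (Real.pi * s n))) atTop (𝓝 p))
    (hq : Tendsto (fun n => (hh (s n))⁻¹ * Real.cos (Real.pi * s n)) atTop (𝓝 q)) (κ : ℝ) :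
    Tendsto (fun n => Hd (T (s n)) (s n) κ) atTop
      (𝓝 ((A - (κ:ℂ) • 1).det * (((p - q * κ : ℝ) : ℂ) • 1 - (q:ℂ) • A).det)) := by
  have h0 : Tendsto (fun n => κ / (4 * s n)) atTop (𝓝 0) :=
    tendsto_const_nhds.div_atTop (hs.const_mul_atTop (by norm_num))
  have hE : Tendsto (fun n => Complex.exp (((κ / (4 * s n) : ℝ) : ℂ) * Complex.I)) atTop (𝓝 1) := by
    have hc : Continuous fun y : ℝ => Complex.exp ((y : ℂ) * Complex.I) := by fun_prop
    have h : Tendsto (fun n => Complex.exp (((κ / (4 * s n) : ℝ) : ℂ) * Complex.I)) atTop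
      (𝓝 (Complex.exp (((0:ℝ) : ℂ) * Complex.I))) := (hc.tendsto 0).comp h0
    rw [Complex.ofReal_zero, zero_mul, Complex.exp_zero] at h
    exact h
  have hsin : Tendsto (fun n => (hh (s n))⁻¹ * Real.sin (Real.pi * s n)) atTop (𝓝 0) := by
    have h4 : Tendsto (fun n => (4 * s n)⁻¹) atTop (𝓝 0) :=
      (hs.const_mul_atTop (by norm_num : (0:ℝ) < 4)).inv_tendsto_atTop
    have := hp.mul h4
    rw [mul_zero] at this
    refine this.congr' ?_
    filter_upwards [hs.eventually_gt_atTop 0] with n hn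
    field_simp
  have hF2 : Tendsto (fun n => ((hh (s n) : ℂ)⁻¹ *
      Complex.exp (((-(Real.pi * s n) + κ / (4 * s n) : ℝ) : ℂ) * Complex.I))) atTop (𝓝 (q:ℂ)) := by
    have h1 : Tendsto (fun n => (((hh (s n))⁻¹ * Real.cos (Real.pi * s n) : ℝ) : ℂ) -
        (((hh (s n))⁻¹ * Real.sin (Real.pi * s n) : ℝ) : ℂ) * Complex.I) atTop
        (𝓝 ((q:ℂ) - ((0:ℝ):ℂ) * Complex.I)) :=
      (Complex.continuous_ofReal.tendsto _ |>.comp hq).sub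
        ((Complex.continuous_ofReal.tendsto _ |>.comp hsin).mul_const _)
    have h2 := h1.mul hE
    simp only [Complex.ofReal_zero, zero_mul, sub_zero, mul_one] at h2
    refine h2.congr fun n => ?_
    have : Complex.exp (((-(Real.pi * s n) + κ / (4 * s n) : ℝ) : ℂ) * Complex.I) =
      Complex.exp (((-(Real.pi * s n) : ℝ) : ℂ) * Complex.I) *
      Complex.exp (((κ / (4 * s n) : ℝ) : ℂ) * Complex.I) := by
      rw [← Complex.exp_add]; congr 1; push_cast; ring
    rw [this, Complex.exp_mul_I ((-(Real.pi * s n) : ℝ) : ℂ)]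
    push_cast
    rw [Complex.cos_neg, Complex.sin_neg]
    ring
  have hG1 : Tendsto (fun n => ((-(4 * s n * Real.sin (κ / (4 * s n))) : ℝ) : ℂ)) atTop
      (𝓝 ((-κ : ℝ) : ℂ)) :=
    (Complex.continuous_ofReal.tendsto _).comp (sin_tendsto hs κ).neg
  have hG2 : Tendsto (fun n => ((((hh (s n))⁻¹ *
      (4 * s n * Real.sin (Real.pi * s n - κ / (4 * s n))) : ℝ) : ℂ))) atTop
      (𝓝 ((p - q * κ : ℝ) : ℂ)) := by
    refine (Complex.continuous_ofReal.tendsto _).comp ?_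
    have hc : Tendsto (fun n => Real.cos (κ / (4 * s n))) atTop (𝓝 1) := by
      have h : Tendsto (fun n => Real.cos (κ / (4 * s n))) atTop (𝓝 (Real.cos 0)) :=
        (Real.continuous_cos.tendsto 0).comp h0
      rw [Real.cos_zero] at h
      exact h
    have := (hp.mul hc).sub (hq.mul (sin_tendsto hs κ))
    rw [mul_one] at this
    refine this.congr fun n => ?_
    rw [Real.sin_sub]; ring
  have hX := hT.comp hs
  have hF : Tendsto (fun n => Fm m (s n) κ) atTop
      (𝓝 (Matrix.fromBlocks ((1:ℂ) • 1) 0 0 ((q:ℂ) • 1))) := by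
    unfold Fm
    exact blk_tendsto hE hF2
  have hG : Tendsto (fun n => Gm m (s n) κ) atTop
      (𝓝 (Matrix.fromBlocks (((-κ : ℝ) : ℂ) • 1) 0 0 (((p - q * κ : ℝ) : ℂ) • 1))) := by
    unfold Gm
    exact blk_tendsto hG1 hG2
  have hall := (hF.mul hX).add hG
  have hdet := ((continuous_id.matrix_det (n := Fin m ⊕ Fin m) (R := ℂ)).tendsto _).comp hall
  have e : (id (Matrix.fromBlocks ((1:ℂ) • (1 : Matrix (Fin m) (Fin m) ℂ)) 0 0 ((q:ℂ) • 1) *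
      Matrix.fromBlocks A 0 0 (-A) +
      Matrix.fromBlocks (((-κ : ℝ) : ℂ) • 1) 0 0 (((p - q * κ : ℝ) : ℂ) • 1))).det =
      (A - (κ:ℂ) • 1).det * (((p - q * κ : ℝ) : ℂ) • 1 - (q:ℂ) • A).det := by
    rw [id, Matrix.fromBlocks_multiply, Matrix.fromBlocks_add]
    simp only [Matrix.smul_mul, Matrix.one_mul, Matrix.zero_mul, Matrix.mul_zero, add_zero,
      zero_add, smul_zero, one_smul]
    rw [Matrix.det_fromBlocks_zero₂₁]
    congr 2
    · rw [Complex.ofReal_neg, neg_smul, sub_eq_add_neg]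
    · rw [smul_neg, add_comm, ← sub_eq_add_neg]
  rw [e] at hdet
  refine hdet.congr' ?_
  filter_upwards [hs.eventually_gt_atTop 0] with n hn
  rw [Hd_eq _ hn]
  rfl

theorem zk_norm (s κ : ℝ) : ‖zk s κ‖ = 1 := Complex.norm_exp_ofReal_mul_I _

theorem zk_conj (s κ : ℝ) : zk s κ * (starRingEnd ℂ) (zk s κ) = 1 := by
  rw [Complex.mul_conj, Complex.normSq_eq_norm_sq, zk_norm]; simp

theorem Dm_conj (s : ℝ) : (Dm m s).map (starRingEnd ℂ) = Dm m (-s) := by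
  ext i j
  rcases i with i | i <;> rcases j with j | j <;>
    simp [Dm, Matrix.one_apply, apply_ite (starRingEnd ℂ), ← Complex.exp_conj]

theorem Lm_det (s κ : ℝ) :
    (Lm m s κ).det = ((-(4 * s ^ 2) * (hh s)⁻¹ : ℝ) : ℂ) ^ m * ((starRingEnd ℂ) (zk s κ)) ^ m := by
  rw [Lm, Matrix.det_fromBlocks_zero₂₁, Matrix.det_smul, Matrix.det_smul, Matrix.det_one,
    mul_one, mul_one, Fintype.card_fin, ← mul_pow, ← mul_pow]
  congr 1
  have h1 : Complex.exp (((-(Real.pi * s) + κ / (4 * s) : ℝ) : ℂ) * Complex.I) *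
    Complex.exp (((κ / (4 * s) : ℝ) : ℂ) * Complex.I) = (starRingEnd ℂ) (zk s κ) := by
    rw [zk, ← Complex.exp_add, ← Complex.exp_conj]
    congr 1
    rw [map_mul, Complex.conj_ofReal, Complex.conj_I]
    have : κ / (2 * s) = κ / (4 * s) + κ / (4 * s) := by
      rw [← add_div, ← mul_div_mul_left _ (2 * s) (two_ne_zero)]; congr 1 <;> ring
    rw [this]
    push_cast
    ring
  have h2 := Complex.I_sq
  push_cast at h1 ⊢
  linear_combination (4 * s^2 * (hh s : ℂ)⁻¹ * Complex.I ^ 2) * h1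
    + 4 * s ^ 2 * (hh s : ℂ)⁻¹ * (starRingEnd ℂ) (zk s κ) * h2

theorem Hd_conj {T : Matrix (Fin m ⊕ Fin m) (Fin m ⊕ Fin m) ℂ} {s : ℝ}
    (hT : T.map (starRingEnd ℂ) * Dm m s * T = Dm m s) (κ : ℝ) :
    (starRingEnd ℂ) (Hd T s κ) = (starRingEnd ℂ) ((Dm m s * T).det) * Hd T s κ := by
  set M := Dm m s * T with hM
  set z := zk s κ with hz
  have hzz : z * (starRingEnd ℂ) z = 1 := zk_conj s κ
  have hMM : M.map (starRingEnd ℂ) * M = 1 := by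
    rw [hM, Matrix.map_mul, Dm_conj, mul_assoc, ← mul_assoc (T.map _), hT, Dm_neg_mul]
  have hF : (starRingEnd ℂ) ((M - z • 1).det) =
      ((starRingEnd ℂ) z) ^ (2 * m) * (starRingEnd ℂ) M.det * (M - z • 1).det := by
    have h1 : (M - z • 1).map (starRingEnd ℂ) =
        (-(starRingEnd ℂ) z) • (M.map (starRingEnd ℂ) * (M - z • 1)) := by
      rw [mul_sub, hMM, Matrix.mul_smul, mul_one, smul_sub, smul_smul]
      rw [neg_mul, mul_comm, hzz, neg_smul, neg_smul, one_smul]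
      ext i j
      simp [Matrix.one_apply, apply_ite (starRingEnd ℂ)]
      ring
    rw [RingHom.map_det, RingHom.map_det, RingHom.mapMatrix_apply, RingHom.mapMatrix_apply, h1,
      Matrix.det_smul, Matrix.det_mul]
    have : Fintype.card (Fin m ⊕ Fin m) = 2 * m := by simp; ring
    rw [this, (even_two_mul m).neg_pow]
    ring
  unfold Hd
  rw [Matrix.det_mul, Lm_det, map_mul, hF, map_mul, map_pow, map_pow, Complex.conj_ofReal,
    Complex.conj_conj]
  have : z ^ m * ((starRingEnd ℂ) z) ^ (2 * m) = ((starRingEnd ℂ) z) ^ m := by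
    rw [two_mul, pow_add, ← mul_assoc, ← mul_pow, hzz, one_pow, one_mul]
  linear_combination ((((-(4 * s ^ 2) * (hh s)⁻¹ : ℝ) : ℂ) ^ m) *
    (starRingEnd ℂ) M.det * (M - z • 1).det) * this

theorem Hd_cont (T : Matrix (Fin m ⊕ Fin m) (Fin m ⊕ Fin m) ℂ) (s : ℝ) :
    Continuous (fun κ => Hd T s κ) := by
  unfold Hd
  refine Continuous.matrix_det (Continuous.matrix_mul ?_ ?_)
  · unfold Lm
    have c1 : Continuous fun κ : ℝ => (2 * Complex.I * s * Complex.exp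
      (((-(Real.pi * s) + κ / (4 * s) : ℝ) : ℂ) * Complex.I)) := by fun_prop
    have c2 : Continuous fun κ : ℝ => (2 * Complex.I * s * (hh s : ℂ)⁻¹ *
      Complex.exp (((κ / (4 * s) : ℝ) : ℂ) * Complex.I)) := by fun_prop
    exact Continuous.matrix_fromBlocks (c1.smul continuous_const) continuous_const
        continuous_const (c2.smul continuous_const)
  · have c1 : Continuous fun κ => zk s κ := by unfold zk; fun_prop
    exact continuous_const.sub (c1.smul continuous_const)

theorem exists_bloch_phase {z : ℂ} (hz : ‖z‖ = 1) : ∃ t ∈ Ioc (-1:ℝ) 1, blochPhase t = z := by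
  refine ⟨z.arg / Real.pi, ⟨?_, ?_⟩, ?_⟩
  · rw [lt_div_iff₀ Real.pi_pos]; linarith [Complex.neg_pi_lt_arg z]
  · rw [div_le_one Real.pi_pos]; exact Complex.arg_le_pi z
  · have h := Complex.norm_mul_exp_arg_mul_I z
    rw [hz, Complex.ofReal_one, one_mul] at h
    rw [blochPhase]
    conv_rhs => rw [← h]
    congr 1
    have : (Real.pi : ℂ) ≠ 0 := by exact_mod_cast Real.pi_ne_zero
    push_cast
    field_simp

theorem Hd_ne_zero {Q : ℝ → Matrix (Fin m) (Fin m) ℂ}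
    {T : Matrix (Fin m ⊕ Fin m) (Fin m ⊕ Fin m) ℂ} {s : ℝ} (hs : 1 ≤ s)
    (hT : ∀ t : ℝ, (Dm m s * T - blochPhase t • 1).det = 0 → IsBlochEigenvalue Q t ((s : ℂ) ^ 2))
    (hn : ((s:ℂ)^2) ∉ SpecLQ Q) (κ : ℝ) : Hd T s κ ≠ 0 := by
  unfold Hd
  rw [Matrix.det_mul, Lm_det]
  refine mul_ne_zero (mul_ne_zero (pow_ne_zero _ ?_) (pow_ne_zero _ ?_)) ?_
  · have := hh_pos s
    have : -(4 * s ^ 2) * (hh s)⁻¹ ≠ 0 := by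
      have : s ≠ 0 := by linarith
      rw [neg_mul, neg_ne_zero]; positivity
    exact_mod_cast this
  · intro h
    have := zk_conj s κ
    rw [h, mul_zero] at this
    exact zero_ne_one this
  · intro h
    obtain ⟨t, ht, hz⟩ := exists_bloch_phase (zk_norm s κ)
    rw [← hz] at h
    exact hn ⟨t, ht, hT t h⟩

theorem Hd_ratio_pos {Q : ℝ → Matrix (Fin m) (Fin m) ℂ}
    {T : Matrix (Fin m ⊕ Fin m) (Fin m ⊕ Fin m) ℂ} {s : ℝ} (hs : 1 ≤ s)
    (hTc : T.map (starRingEnd ℂ) * Dm m s * T = Dm m s)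
    (hT : ∀ t : ℝ, (Dm m s * T - blochPhase t • 1).det = 0 → IsBlochEigenvalue Q t ((s : ℂ) ^ 2))
    (hn : ((s:ℂ)^2) ∉ SpecLQ Q) {κ₁ κ₂ : ℝ} (hκ : κ₁ ≤ κ₂) :
    0 < (Hd T s κ₁ / Hd T s κ₂).re := by
  have hne := Hd_ne_zero hs hT hn
  have hreal : ∀ κ, (((Hd T s κ / Hd T s κ₂).re : ℝ) : ℂ) = Hd T s κ / Hd T s κ₂ := by
    intro κ
    apply Complex.conj_eq_iff_re.1
    rw [map_div₀, Hd_conj hTc, Hd_conj hTc]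
    have h0 : (starRingEnd ℂ) ((Dm m s * T).det) ≠ 0 := by
      intro h
      have h1 := Hd_conj hTc κ₂
      rw [h, zero_mul] at h1
      exact hne κ₂ ((map_eq_zero _).1 h1)
    rw [mul_div_mul_left _ _ h0]
  by_contra hcon
  push Not at hcon
  have hc : Continuous fun κ => (Hd T s κ / Hd T s κ₂).re :=
    Complex.continuous_re.comp ((Hd_cont T s).div_const _)
  have h1 : (Hd T s κ₂ / Hd T s κ₂).re = 1 := by rw [div_self (hne κ₂)]; simp
  obtain ⟨κ, -, hk⟩ := intermediate_value_Icc hκ hc.continuousOn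
    (show (0:ℝ) ∈ Icc _ _ from ⟨hcon, by simp only [h1]; norm_num⟩)
  have h2 := hreal κ
  simp only at hk
  rw [hk, Complex.ofReal_zero] at h2
  exact div_ne_zero (hne κ) (hne κ₂) h2.symm

theorem no_sign_change {Q : ℝ → Matrix (Fin m) (Fin m) ℂ}
    {T : ℝ → Matrix (Fin m ⊕ Fin m) (Fin m ⊕ Fin m) ℂ}
    (hTc : ∀ s, 1 ≤ s → (T s).map (starRingEnd ℂ) * Dm m s * T s = Dm m s)
    (hTb : ∀ s, 1 ≤ s → ∀ t : ℝ, (Dm m s * T s - blochPhase t • 1).det = 0 →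
        IsBlochEigenvalue Q t ((s : ℂ) ^ 2))
    (hT : Tendsto (fun s : ℝ => (2 * Complex.I * s : ℂ) • (T s - 1)) atTop
        (𝓝 (Matrix.fromBlocks (meanMatrix Q) 0 0 (-(meanMatrix Q)))))
    {B : Matrix (Fin m) (Fin m) ℝ} (hB : meanMatrix Q = B.map Complex.ofRealHom)
    {s : ℕ → ℝ} (hs : Tendsto s atTop atTop) (hs1 : ∀ n, 1 ≤ s n)
    (hn : ∀ n, ((s n : ℂ)^2) ∉ SpecLQ Q) {p q : ℝ}
    (hp : Tendsto (fun n => (hh (s n))⁻¹ * (4 * s n * Real.sin (Real.pi * s n))) atTop (𝓝 p))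
    (hq : Tendsto (fun n => (hh (s n))⁻¹ * Real.cos (Real.pi * s n)) atTop (𝓝 q))
    {κ₁ κ₂ : ℝ} (hκ : κ₁ ≤ κ₂)
    (h2 : ((B - κ₂ • 1).det * ((p - q * κ₂) • 1 - q • B).det) ≠ 0) :
    0 ≤ ((B - κ₁ • 1).det * ((p - q * κ₁) • 1 - q • B).det) /
      ((B - κ₂ • 1).det * ((p - q * κ₂) • 1 - q • B).det) := by
  have hlim : ∀ κ : ℝ, Tendsto (fun n => Hd (T (s n)) (s n) κ) atTop
      (𝓝 ((((B - κ • 1).det * ((p - q * κ) • 1 - q • B).det : ℝ)) : ℂ)) := by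
    intro κ
    have h := Hd_tendsto hT hs hp hq κ
    have e1 : (meanMatrix Q - (κ:ℂ) • 1).det = (((B - κ • 1).det : ℝ) : ℂ) := by
      have := Complex.ofRealHom.map_det (B - κ • 1)
      rw [Complex.ofRealHom_eq_coe] at this
      rw [this, hB]
      congr 1
      ext i j
      simp [Matrix.one_apply, apply_ite Complex.ofReal]
    have e2 : (((p - q * κ : ℝ) : ℂ) • 1 - (q:ℂ) • meanMatrix Q).det =
        ((((p - q * κ) • 1 - q • B).det : ℝ) : ℂ) := by
      have := Complex.ofRealHom.map_det ((p - q * κ) • 1 - q • B)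
      rw [Complex.ofRealHom_eq_coe] at this
      rw [this, hB]
      congr 1
      ext i j
      simp [Matrix.one_apply, apply_ite Complex.ofReal]
    rw [e1, e2, ← Complex.ofReal_mul] at h
    exact h
  have h3 := (hlim κ₁).div (hlim κ₂) (by exact_mod_cast h2)
  rw [← Complex.ofReal_div] at h3
  have h4 := (Complex.continuous_re.tendsto _).comp h3
  rw [Complex.ofReal_re] at h4
  refine ge_of_tendsto' h4 fun n => ?_
  exact (Hd_ratio_pos (hs1 n) (hTc _ (hs1 n)) (hTb _ (hs1 n)) (hn n) hκ).le

end DetAsymp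


section RealPart

variable {m : ℕ}

theorem meanMatrix_real {Q : ℝ → Matrix (Fin m) (Fin m) ℂ}
    (hQper : ∀ x : ℝ, Q (x + Real.pi) = Q x)
    (hQPT : ∀ (x : ℝ) (i j : Fin m), (starRingEnd ℂ) (Q (-x) i j) = Q x i j) :
    ∃ B : Matrix (Fin m) (Fin m) ℝ, meanMatrix Q = B.map Complex.ofRealHom := by
  refine ⟨Matrix.of fun i j => (meanMatrix Q i j).re, ?_⟩
  ext i j
  simp only [Matrix.map_apply, Matrix.of_apply, Complex.ofRealHom_eq_coe]
  symm
  apply Complex.conj_eq_iff_re.1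
  simp only [meanMatrix, Matrix.of_apply]
  have hper : Function.Periodic (fun x => Q x i j) Real.pi := fun x => by simp only [hQper]
  have h1 : (starRingEnd ℂ) (∫ x in (0:ℝ)..Real.pi, Q x i j) =
      ∫ x in (0:ℝ)..Real.pi, (starRingEnd ℂ) (Q x i j) := by
    rw [intervalIntegral.integral_of_le Real.pi_pos.le,
      intervalIntegral.integral_of_le Real.pi_pos.le]
    exact integral_conj.symm
  have h2 : ∀ x, (starRingEnd ℂ) (Q x i j) = Q (-x) i j := fun x => by
    have := hQPT (-x) i j
    rw [neg_neg] at this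
    exact this
  rw [h1]
  simp only [h2]
  rw [intervalIntegral.integral_comp_neg (fun x => Q x i j)]
  have := hper.intervalIntegral_add_eq (-Real.pi) 0
  simpa using this

theorem odd_real {A : Matrix (Fin m) (Fin m) ℂ} {B : Matrix (Fin m) (Fin m) ℝ}
    (hB : A = B.map Complex.ofRealHom) {μj : ℝ}
    (hodd : Odd ((A.charpoly).rootMultiplicity (μj : ℂ))) :
    Odd (B.charpoly.rootMultiplicity μj) := by
  rw [hB, Matrix.charpoly_map] at hodd
  have := Polynomial.eq_rootMultiplicity_map (p := B.charpoly) (f := Complex.ofRealHom)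
    Complex.ofRealHom.injective μj
  rw [this]
  exact hodd

theorem odd_sign {f : Polynomial ℝ} (hf : f ≠ 0) {μ : ℝ} (hodd : Odd (f.rootMultiplicity μ)) :
    ∃ η₀ > 0, ∀ η, 0 < η → η < η₀ → f.eval (μ - η) * f.eval (μ + η) < 0 := by
  obtain ⟨w, hw, hnd⟩ := Polynomial.exists_eq_pow_rootMultiplicity_mul_and_not_dvd f hf μ
  set r := f.rootMultiplicity μ
  have hwμ : w.eval μ ≠ 0 := fun h => hnd (Polynomial.dvd_iff_isRoot.2 h)
  have hc : Continuous fun x => w.eval x * w.eval μ := by fun_prop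
  have hpos : 0 < w.eval μ * w.eval μ := mul_self_pos.2 hwμ
  have hev : ∀ᶠ x in 𝓝 μ, 0 < w.eval x * w.eval μ := (hc.tendsto μ).eventually_const_lt hpos
  obtain ⟨η₀, h0, hball⟩ := Metric.eventually_nhds_iff.1 hev
  refine ⟨η₀, h0, fun η h1 h2 => ?_⟩
  have a1 := hball (y := μ - η) (by rw [Real.dist_eq]; simp [abs_of_pos h1, h2])
  have a2 := hball (y := μ + η) (by rw [Real.dist_eq]; simp [abs_of_pos h1, h2])
  have a3 : 0 < w.eval (μ - η) * w.eval (μ + η) := by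
    have := mul_pos a1 a2
    by_contra hh
    push Not at hh
    nlinarith
  rw [hw]
  simp only [Polynomial.eval_mul, Polynomial.eval_pow, Polynomial.eval_sub, Polynomial.eval_X,
    Polynomial.eval_C]
  have e1 : μ - η - μ = -η := by ring
  have e2 : μ + η - μ = η := by ring
  rw [e1, e2, hodd.neg_pow]
  have : 0 < η ^ r := by positivity
  have : 0 < η ^ r * η ^ r * (w.eval (μ - η) * w.eval (μ + η)) := by positivity
  nlinarith

theorem det_sub_smul (B : Matrix (Fin m) (Fin m) ℝ) (κ : ℝ) :
    (B - κ • 1).det = (-1) ^ m * B.charpoly.eval κ := by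
  rw [Matrix.eval_charpoly]
  have : B - κ • 1 = -(Matrix.scalar (Fin m) κ - B) := by
    rw [neg_sub, Matrix.scalar_apply, Matrix.smul_one_eq_diagonal]
  rw [this, Matrix.det_neg, Fintype.card_fin]

theorem det_smul_sub (B : Matrix (Fin m) (Fin m) ℝ) {p q : ℝ} (hq : q ≠ 0) (κ : ℝ) :
    ((p - q * κ) • 1 - q • B).det = q ^ m * B.charpoly.eval ((p - q * κ) / q) := by
  rw [Matrix.eval_charpoly]
  have : (p - q * κ) • 1 - q • B = q • (Matrix.scalar (Fin m) ((p - q * κ) / q) - B) := by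
    rw [Matrix.scalar_apply, ← Matrix.smul_one_eq_diagonal, smul_sub, smul_smul,
      mul_div_cancel₀ _ hq]
  rw [this, Matrix.det_smul, Fintype.card_fin]

theorem g_sign (B : Matrix (Fin m) (Fin m) ℝ) {p q κ₁ κ₂ : ℝ} (hκ : κ₁ ≤ κ₂)
    (hpq : q = 0 → p ≠ 0)
    (hsign : B.charpoly.eval κ₁ * B.charpoly.eval κ₂ < 0)
    (hnz : q ≠ 0 → ∀ κ ∈ Icc κ₁ κ₂, B.charpoly.eval ((p - q * κ) / q) ≠ 0) :
    ((B - κ₂ • 1).det * ((p - q * κ₂) • 1 - q • B).det) ≠ 0 ∧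
    ((B - κ₁ • 1).det * ((p - q * κ₁) • 1 - q • B).det) /
      ((B - κ₂ • 1).det * ((p - q * κ₂) • 1 - q • B).det) < 0 := by
  have key : 0 < ((p - q * κ₁) • 1 - q • B).det * ((p - q * κ₂) • 1 - q • B).det := by
    by_cases hq : q = 0
    · subst hq
      have hp := hpq rfl
      simp only [zero_mul, sub_zero, zero_smul, Matrix.det_smul, Matrix.det_one, mul_one]
      exact mul_self_pos.2 (pow_ne_zero _ hp)
    · rw [det_smul_sub B hq, det_smul_sub B hq]
      have h1 : 0 < B.charpoly.eval ((p - q * κ₁) / q) * B.charpoly.eval ((p - q * κ₂) / q) := by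
        by_contra hcon
        push Not at hcon
        have hc : Continuous fun κ => B.charpoly.eval ((p - q * κ) / q) *
          B.charpoly.eval ((p - q * κ₂) / q) := by fun_prop
        obtain ⟨κ, hk, he⟩ := intermediate_value_Icc hκ hc.continuousOn
          (show (0:ℝ) ∈ Icc _ _ from ⟨hcon, mul_self_nonneg _⟩)
        exact mul_ne_zero (hnz hq κ hk) (hnz hq κ₂ ⟨hκ, le_rfl⟩) he
      have h2 : 0 < q ^ m * q ^ m := mul_self_pos.2 (pow_ne_zero _ hq)
      have := mul_pos h2 h1
      nlinarith
  have key2 : (B - κ₁ • 1).det * (B - κ₂ • 1).det < 0 := by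
    rw [det_sub_smul, det_sub_smul]
    have : ((-1:ℝ) ^ m) * (-1) ^ m = 1 := by rw [← mul_pow]; simp
    calc _ = (((-1:ℝ) ^ m) * (-1) ^ m) * (B.charpoly.eval κ₁ * B.charpoly.eval κ₂) := by ring
      _ < 0 := by rw [this, one_mul]; exact hsign
  have hne2 : (B - κ₂ • 1).det ≠ 0 := fun h => by rw [h, mul_zero] at key2; exact lt_irrefl _ key2
  have hne3 : ((p - q * κ₂) • 1 - q • B).det ≠ 0 := fun h => by
    rw [h, mul_zero] at key; exact lt_irrefl _ key
  refine ⟨mul_ne_zero hne2 hne3, ?_⟩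
  rw [mul_div_mul_comm]
  apply mul_neg_of_neg_of_pos
  · rcases mul_neg_iff.1 key2 with ⟨a, b⟩ | ⟨a, b⟩
    · exact div_neg_of_pos_of_neg a b
    · exact div_neg_of_neg_of_pos a b
  · rcases pos_and_pos_or_neg_and_neg_of_mul_pos key with ⟨a, b⟩ | ⟨a, b⟩
    · exact div_pos a b
    · exact div_pos_of_neg_of_neg a b

end RealPart


section Trig

theorem hh_bound_p (s : ℝ) : |(hh s)⁻¹ * (4 * s * Real.sin (Real.pi * s))| ≤ 1 := by
  rw [abs_mul, abs_inv, abs_of_pos (hh_pos s), inv_mul_le_iff₀ (hh_pos s)]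
  unfold hh; linarith

theorem hh_bound_q (s : ℝ) : |(hh s)⁻¹ * Real.cos (Real.pi * s)| ≤ 1 := by
  rw [abs_mul, abs_inv, abs_of_pos (hh_pos s), inv_mul_le_iff₀ (hh_pos s)]
  have := Real.abs_cos_le_one (Real.pi * s)
  have := abs_nonneg (4 * s * Real.sin (Real.pi * s))
  unfold hh; linarith

theorem pq_ne {s : ℕ → ℝ} (hs1 : ∀ n, 1 ≤ s n) {p q : ℝ}
    (hp : Tendsto (fun n => (hh (s n))⁻¹ * (4 * s n * Real.sin (Real.pi * s n))) atTop (𝓝 p))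
    (hq : Tendsto (fun n => (hh (s n))⁻¹ * Real.cos (Real.pi * s n)) atTop (𝓝 q)) :
    q = 0 → p ≠ 0 := by
  intro hq0 hp0
  rw [hq0] at hq
  rw [hp0] at hp
  have h := hp.abs.add hq.abs
  simp only [abs_zero, add_zero] at h
  have hle : ∀ n, (1/4 : ℝ) ≤ |(hh (s n))⁻¹ * (4 * s n * Real.sin (Real.pi * s n))| +
      |(hh (s n))⁻¹ * Real.cos (Real.pi * s n)| := by
    intro n
    rw [abs_mul (hh (s n))⁻¹, abs_mul (hh (s n))⁻¹, abs_inv, abs_of_pos (hh_pos (s n)), ← mul_add,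
      le_inv_mul_iff₀ (hh_pos (s n))]
    set S := |4 * s n * Real.sin (Real.pi * s n)| with hS
    have h1 : |Real.sin (Real.pi * s n)| ≤ S := by
      rw [hS, abs_mul, abs_of_pos (by linarith [hs1 n] : 0 < 4 * s n)]
      exact le_mul_of_one_le_left (abs_nonneg _) (by linarith [hs1 n])
    have h2 : 1 ≤ |Real.sin (Real.pi * s n)| + |Real.cos (Real.pi * s n)| := by
      have a := Real.sin_sq_add_cos_sq (Real.pi * s n)
      have b := Real.abs_sin_le_one (Real.pi * s n)
      have c := Real.abs_cos_le_one (Real.pi * s n)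
      rw [← sq_abs (Real.sin _), ← sq_abs (Real.cos _)] at a
      nlinarith [abs_nonneg (Real.sin (Real.pi * s n)), abs_nonneg (Real.cos (Real.pi * s n))]
    have : hh (s n) = 1 + S := rfl
    rw [this]
    have := abs_nonneg (Real.cos (Real.pi * s n))
    have := abs_nonneg (Real.sin (Real.pi * s n))
    linarith
  have := ge_of_tendsto' h hle
  norm_num at this

theorem lam_tendsto {s : ℕ → ℝ} (hs : Tendsto s atTop atTop) {p q y : ℝ} (hq0 : q ≠ 0)
    (hpy : p = q * y)
    (hp : Tendsto (fun n => (hh (s n))⁻¹ * (4 * s n * Real.sin (Real.pi * s n))) atTop (𝓝 p))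
    (hq : Tendsto (fun n => (hh (s n))⁻¹ * Real.cos (Real.pi * s n)) atTop (𝓝 q)) :
    Tendsto (fun n => (s n) ^ 2 - (round (s n) : ℝ) ^ 2) atTop (𝓝 (y / (2 * Real.pi))) := by
  set r : ℕ → ℝ := fun n => s n - round (s n) with hr
  have htan : Tendsto (fun n => 4 * s n * Real.tan (Real.pi * s n)) atTop (𝓝 y) := by
    have := hp.div hq hq0
    rw [hpy, mul_div_cancel_left₀ _ hq0] at this
    refine this.congr fun n => ?_
    simp only [Pi.div_apply]
    rw [mul_div_mul_left _ _ (inv_ne_zero (hh_pos (s n)).ne'), Real.tan_eq_sin_div_cos]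
    ring
  have htan' : ∀ n, Real.tan (Real.pi * s n) = Real.tan (Real.pi * r n) := by
    intro n
    have : Real.pi * s n = Real.pi * r n + (round (s n) : ℤ) * Real.pi := by
      simp only [hr]; ring
    rw [this, Real.tan_add_int_mul_pi]
  have h4 : Tendsto (fun n => (4 * s n)⁻¹) atTop (𝓝 0) :=
      (hs.const_mul_atTop (by norm_num : (0:ℝ) < 4)).inv_tendsto_atTop
  have htan0 : Tendsto (fun n => Real.tan (Real.pi * r n)) atTop (𝓝 0) := by
    have := htan.mul h4
    rw [mul_zero] at this
    refine this.congr' ?_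
    filter_upwards [hs.eventually_gt_atTop 0] with n hn
    rw [← htan']; field_simp
  have hrabs : ∀ n, |r n| ≤ 1 / 2 := fun n => abs_sub_round (s n)
  have hcos0 : ∀ᶠ n in atTop, Real.cos (Real.pi * s n) ≠ 0 := by
    filter_upwards [hq.eventually_ne hq0] with n hn h
    rw [h, mul_zero] at hn; exact hn rfl
  have hlt : ∀ᶠ n in atTop, |r n| < 1 / 2 := by
    filter_upwards [hcos0] with n hn
    refine lt_of_le_of_ne (hrabs n) fun h => hn ?_
    have : Real.pi * s n = Real.pi * r n + (round (s n) : ℤ) * Real.pi := by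
      simp only [hr]; ring
    rw [this, Real.cos_add_int_mul_pi]
    have : Real.cos (Real.pi * r n) = 0 := by
      rw [← Real.cos_abs, abs_mul, h, abs_of_pos Real.pi_pos, mul_one_div, Real.cos_pi_div_two]
    rw [this]; simp
  have hpr : Tendsto (fun n => Real.pi * r n) atTop (𝓝 0) := by
    have h := (Real.continuous_arctan.tendsto 0).comp htan0
    rw [Real.arctan_zero] at h
    refine h.congr' ?_
    filter_upwards [hlt] with n hn
    have := abs_lt.1 hn
    simp only [Function.comp_apply]
    rw [Real.arctan_tan]
    · nlinarith [Real.pi_pos]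
    · nlinarith [Real.pi_pos]
  have hr0 : Tendsto r atTop (𝓝 0) := by
    have := hpr.const_mul (Real.pi⁻¹)
    rw [mul_zero] at this
    refine this.congr fun n => ?_
    rw [inv_mul_cancel_left₀ Real.pi_ne_zero]
  have hsc : Tendsto (fun n => Real.cos (Real.pi * r n) / Real.sinc (Real.pi * r n)) atTop (𝓝 1) := by
    have h1 := (Real.continuous_cos.tendsto 0).comp hpr
    have h2 := (Real.continuous_sinc.tendsto 0).comp hpr
    rw [Real.cos_zero] at h1
    rw [Real.sinc_zero] at h2
    have := h1.div h2 one_ne_zero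
    rw [div_one] at this
    exact this
  have hsr : Tendsto (fun n => 4 * Real.pi * (s n * r n)) atTop (𝓝 y) := by
    have := htan.mul hsc
    rw [mul_one] at this
    refine this.congr' ?_
    filter_upwards [hlt] with n hn
    rw [htan']
    by_cases h0 : r n = 0
    · simp [h0]
    · have hne : Real.pi * r n ≠ 0 := mul_ne_zero Real.pi_ne_zero h0
      rw [Real.sinc_of_ne_zero hne, Real.tan_eq_sin_div_cos]
      have hc : Real.cos (Real.pi * r n) ≠ 0 := by
        apply ne_of_gt
        apply Real.cos_pos_of_mem_Ioo
        have := abs_lt.1 hn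
        constructor <;> nlinarith [Real.pi_pos]
      have hsn : Real.sin (Real.pi * r n) ≠ 0 := by
        intro h
        have hb := abs_lt.1 hn
        exact hne (Real.sin_eq_zero_iff_of_lt_of_lt (by nlinarith [Real.pi_pos])
          (by nlinarith [Real.pi_pos]) |>.1 h)
      field_simp
  have hfin := (hsr.const_mul ((2 * Real.pi)⁻¹)).sub (hr0.mul hr0)
  have e : (2 * Real.pi)⁻¹ * y - 0 * 0 = y / (2 * Real.pi) := by ring
  rw [e] at hfin
  refine hfin.congr fun n => ?_
  have e2 : (round (s n) : ℝ) = s n - r n := by simp only [hr]; ring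
  rw [e2]
  have := Real.pi_ne_zero
  field_simp
  ring

end Trig


section Core

variable {m : ℕ}

theorem core {Q : ℝ → Matrix (Fin m) (Fin m) ℂ} (hQ : Continuous Q)
    (hQper : ∀ x : ℝ, Q (x + Real.pi) = Q x)
    (hQPT : ∀ (x : ℝ) (i j : Fin m), (starRingEnd ℂ) (Q (-x) i j) = Q x i j)
    {B : Matrix (Fin m) (Fin m) ℝ} (hB : meanMatrix Q = B.map Complex.ofRealHom) {μj : ℝ}
    (hodd : Odd (B.charpoly.rootMultiplicity μj)) {ε : ℝ} (hε : 0 < ε) :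
    ∃ Λ : ℝ, ∀ lam : ℝ, Λ ≤ lam →
      (∀ n : ℤ, ∀ μ ∈ B.charpoly.roots,
        ε ≤ |lam - (n:ℝ) ^ 2 - (μj + μ) / (2 * Real.pi)|) → ((lam : ℝ) : ℂ) ∈ SpecLQ Q := by
  obtain ⟨T, hTc, hTb, hT⟩ := transfer_family hQ hQper hQPT
  have hχ : B.charpoly ≠ 0 := (Matrix.charpoly_monic B).ne_zero
  obtain ⟨η₀, hη₀, hsgn⟩ := odd_sign hχ hodd
  by_contra hcon
  push Not at hcon
  choose lam hlam hbad hnot using fun n : ℕ => hcon ((n : ℝ) + 1)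
  set s : ℕ → ℝ := fun n => Real.sqrt (lam n) with hsdef
  have hlam1 : ∀ n, 1 ≤ lam n := fun n => by
    have := hlam n
    have : (0:ℝ) ≤ n := n.cast_nonneg
    linarith
  have hs1 : ∀ n, 1 ≤ s n := fun n => Real.one_le_sqrt.2 (hlam1 n)
  have hsq : ∀ n, s n ^ 2 = lam n := fun n => Real.sq_sqrt (by linarith [hlam1 n])
  have hlamT : Tendsto lam atTop atTop :=
    tendsto_atTop_mono hlam (tendsto_atTop_add_const_right _ _ tendsto_natCast_atTop_atTop)
  have hs : Tendsto s atTop atTop := Real.tendsto_sqrt_atTop.comp hlamT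
  obtain ⟨⟨p, q⟩, -, φ, hφ, hlim⟩ :=
    (isCompact_Icc.prod isCompact_Icc : IsCompact (Icc (-1:ℝ) 1 ×ˢ Icc (-1:ℝ) 1)).tendsto_subseq
    (x := fun n => ((hh (s n))⁻¹ * (4 * s n * Real.sin (Real.pi * s n)),
      (hh (s n))⁻¹ * Real.cos (Real.pi * s n)))
    (fun n => ⟨abs_le.1 (hh_bound_p (s n)), abs_le.1 (hh_bound_q (s n))⟩)
  have hp : Tendsto (fun n => (hh (s (φ n)))⁻¹ * (4 * s (φ n) * Real.sin (Real.pi * s (φ n))))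
    atTop (𝓝 p) := hlim.fst_nhds
  have hq : Tendsto (fun n => (hh (s (φ n)))⁻¹ * Real.cos (Real.pi * s (φ n)))
    atTop (𝓝 q) := hlim.snd_nhds
  have hsφ : Tendsto (fun n => s (φ n)) atTop atTop := hs.comp hφ.tendsto_atTop
  set η := min η₀ ε / 2 with hη
  have hm0 : 0 < min η₀ ε := lt_min hη₀ hε
  have hη1 : 0 < η := by positivity
  have hη2 : η < η₀ := lt_of_lt_of_le (by linarith) (min_le_left η₀ ε)
  have hη3 : η < ε := lt_of_lt_of_le (by linarith) (min_le_right η₀ ε)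
  have hnz : q ≠ 0 → ∀ κ ∈ Icc (μj - η) (μj + η), B.charpoly.eval ((p - q * κ) / q) ≠ 0 := by
    intro hq0 κ hκ h0
    set μ := (p - q * κ) / q with hμ
    have hroot : μ ∈ B.charpoly.roots := (Polynomial.mem_roots hχ).2 h0
    have hpy : p = q * (κ + μ) := by rw [hμ]; field_simp; ring
    have hl := lam_tendsto hsφ hq0 hpy hp hq
    have hl2 := ((hl.sub_const ((μj + μ) / (2 * Real.pi)))).abs
    have hge := ge_of_tendsto' (b := ε) hl2 fun n => by
      have := hbad (φ n) (round (s (φ n))) μ hroot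
      rw [hsq]; exact this
    have e : (κ + μ) / (2 * Real.pi) - (μj + μ) / (2 * Real.pi) = (κ - μj) / (2 * Real.pi) := by
      ring
    rw [e, abs_div, abs_of_pos (by positivity : 0 < 2 * Real.pi)] at hge
    have h1 : |κ - μj| ≤ η := abs_le.2 ⟨by linarith [hκ.1], by linarith [hκ.2]⟩
    have h2 : |κ - μj| / (2 * Real.pi) ≤ |κ - μj| :=
      div_le_self (abs_nonneg _) (by linarith [Real.pi_gt_three])
    linarith
  have hκ : μj - η ≤ μj + η := by linarith
  obtain ⟨g1, g2⟩ := g_sign B hκ (pq_ne (fun n => hs1 (φ n)) hp hq) (hsgn η hη1 hη2) hnz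
  have hno := no_sign_change hTc hTb hT hB hsφ (fun n => hs1 (φ n)) (fun n => by
    have := hnot (φ n)
    rw [← hsq] at this
    exact_mod_cast this) hp hq hκ g1
  linarith

end Core


section Assembly

theorem intervals {ε : ℝ} (hε : 0 < ε) (P : Finset ℝ) : ∀ a b : ℝ,
    ∃ F : Finset (ℝ × ℝ), (∀ x ∈ F, x.1 ≤ x.2) ∧
      (∀ x ∈ F, ∀ y ∈ F, x ≠ y → Disjoint (Icc x.1 x.2) (Icc y.1 y.2)) ∧
      (∀ x ∈ F, Icc x.1 x.2 ⊆ Icc a b) ∧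
      (∀ x ∈ F, ∀ z ∈ Icc x.1 x.2, ∀ p ∈ P, ε ≤ |z - p|) ∧
      b - a - ∑ x ∈ F, (x.2 - x.1) ≤ 2 * ε * P.card := by
  induction P using Finset.induction_on_max with
  | empty =>
    intro a b
    by_cases hab : a ≤ b
    · exact ⟨{(a, b)}, by simpa using hab, by simp, by simp, by simp, by simp⟩
    · exact ⟨∅, by simp, by simp, by simp, by simp, by simp; linarith⟩
  | insert p P hmax ih =>
    intro a b
    have hp : p ∉ P := fun h => lt_irrefl _ (hmax p h)
    rw [Finset.card_insert_of_notMem hp]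
    obtain ⟨F, h1, h2, h3, h4, h5⟩ := ih a (min b (p - ε))
    have hpF : ∀ x ∈ F, ∀ z ∈ Icc x.1 x.2, z ≤ b ∧ z ≤ p - ε := fun x hx z hz =>
      le_min_iff.1 (h3 x hx hz).2
    have h3' : ∀ x ∈ F, Icc x.1 x.2 ⊆ Icc a b := fun x hx z hz =>
      ⟨(h3 x hx hz).1, (hpF x hx z hz).1⟩
    have h4' : ∀ x ∈ F, ∀ z ∈ Icc x.1 x.2, ∀ p' ∈ insert p P, ε ≤ |z - p'| := by
      intro x hx z hz p' hp'
      rcases Finset.mem_insert.1 hp' with rfl | hp'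
      · rw [abs_sub_comm]
        exact le_trans (by linarith [(hpF x hx z hz).2]) (le_abs_self _)
      · exact h4 x hx z hz p' hp'
    have hsum : 0 ≤ ∑ x ∈ F, (x.2 - x.1) := Finset.sum_nonneg fun x hx => by linarith [h1 x hx]
    have hc : (0:ℝ) ≤ 2 * ε * P.card := by positivity
    push_cast
    by_cases hr : max a (p + ε) ≤ b
    · set u := max a (p + ε) with hu
      have hu1 : a ≤ u := le_max_left _ _
      have hu2 : p + ε ≤ u := le_max_right _ _
      have hnot : (u, b) ∉ F := fun h => by
        have := (hpF _ h u ⟨le_rfl, h1 _ h⟩).2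
        linarith
      have hdis : ∀ x ∈ F, Disjoint (Icc x.1 x.2) (Icc u b) := by
        intro x hx
        rw [Set.disjoint_left]
        intro z hz hz2
        have := (hpF x hx z hz).2
        linarith [hz2.1]
      refine ⟨insert (u, b) F, ?_, ?_, ?_, ?_, ?_⟩
      · intro x hx
        rcases Finset.mem_insert.1 hx with rfl | hx
        · exact hr
        · exact h1 x hx
      · intro x hx y hy hxy
        rcases Finset.mem_insert.1 hx with rfl | hx <;> rcases Finset.mem_insert.1 hy with rfl | hy
        · exact absurd rfl hxy
        · exact (hdis y hy).symm
        · exact hdis x hx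
        · exact h2 x hx y hy hxy
      · intro x hx
        rcases Finset.mem_insert.1 hx with rfl | hx
        · exact Icc_subset_Icc_left hu1
        · exact h3' x hx
      · intro x hx
        rcases Finset.mem_insert.1 hx with rfl | hx
        · intro z hz p' hp'
          have hz1 : u ≤ z := hz.1
          have : p' ≤ p := by
            rcases Finset.mem_insert.1 hp' with rfl | hp'
            · exact le_rfl
            · exact (hmax p' hp').le
          exact le_trans (by linarith) (le_abs_self _)
        · exact h4' x hx
      · rw [Finset.sum_insert hnot]
        simp only
        have : u = a ∨ u = p + ε := max_choice _ _
        have : min b (p - ε) = p - ε := min_eq_right (by linarith)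
        rw [this] at h5
        rcases ‹u = a ∨ u = p + ε› with h | h <;> rw [h] <;> linarith
    · refine ⟨F, h1, h2, h3', h4', ?_⟩
      rcases lt_max_iff.1 (not_le.1 hr) with h | h
      · linarith
      · rcases min_choice b (p - ε) with h' | h' <;> rw [h'] at h5 <;> linarith

theorem exists_delta {Good : ℕ → ℝ → Prop} (hmono : ∀ k e e', e ≤ e' → Good k e → Good k e')
    (h : ∀ ε > 0, ∃ K : ℕ, ∀ k ≥ K, Good k ε) :
    ∃ N : ℕ, 0 < N ∧ ∃ δ : ℕ → ℝ, (∀ k, 0 < δ k) ∧ Tendsto δ atTop (𝓝 0) ∧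
      ∀ k, N ≤ k → Good k (δ k) := by
  obtain ⟨N, hN⟩ := h 1 one_pos
  have hnn : ∀ k, 0 ≤ sInf {e : ℝ | 0 < e ∧ Good k e} := fun k =>
    Real.sInf_nonneg fun e he => he.1.le
  have hbdd : ∀ k, BddBelow {e : ℝ | 0 < e ∧ Good k e} := fun k => ⟨0, fun e he => he.1.le⟩
  refine ⟨N + 1, N.succ_pos, fun k => sInf {e : ℝ | 0 < e ∧ Good k e} + 1 / ((k : ℝ) + 1),
    fun k => ?_, ?_, fun k hk => ?_⟩
  · have : (0:ℝ) < 1 / ((k : ℝ) + 1) := by positivity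
    have := hnn k
    linarith
  · have h1 : Tendsto (fun k => sInf {e : ℝ | 0 < e ∧ Good k e}) atTop (𝓝 0) := by
      rw [Metric.tendsto_atTop]
      intro ε hε
      obtain ⟨K, hK⟩ := h (ε / 2) (by positivity)
      refine ⟨K, fun k hk => ?_⟩
      rw [Real.dist_eq, sub_zero, abs_of_nonneg (hnn k)]
      have := csInf_le (hbdd k) (show ε / 2 ∈ _ from ⟨by positivity, hK k hk⟩)
      linarith
    simpa using h1.add tendsto_one_div_add_atTop_nhds_zero_nat
  · have hne : {e : ℝ | 0 < e ∧ Good k e}.Nonempty := ⟨1, one_pos, hN k (by omega)⟩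
    have hpos : (0:ℝ) < 1 / ((k : ℝ) + 1) := by positivity
    obtain ⟨e, he, hlt⟩ := exists_lt_of_csInf_lt hne
      (show sInf {e : ℝ | 0 < e ∧ Good k e} < sInf {e : ℝ | 0 < e ∧ Good k e} + 1 / ((k : ℝ) + 1)
        by linarith)
    exact hmono k e _ hlt.le he.2

theorem far_points {μj C ε : ℝ} {k : ℕ} (hk : |μj| + C + ε + 3 ≤ k) (hε : 0 < ε) (hC : 0 ≤ C)
    {z : ℝ} (hz : z ∈ Icc (μj + (2 * (k:ℝ) - 1) ^ 2 + ε) (μj + (2 * (k:ℝ) + 1) ^ 2)) {n : ℤ}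
    (hn : n.natAbs ∉ ({2 * k - 1, 2 * k, 2 * k + 1} : Finset ℕ)) {y : ℝ} (hy : |y| ≤ C) :
    ε ≤ |z - (n:ℝ) ^ 2 - y| := by
  have ha := abs_nonneg μj
  have h1 := neg_abs_le μj
  have h2 := le_abs_self μj
  have hk3 : (3:ℝ) ≤ k := by linarith
  have hk3' : 3 ≤ k := by exact_mod_cast hk3
  have hy' := abs_le.1 hy
  have hnsq : (n:ℝ) ^ 2 = (n.natAbs : ℝ) ^ 2 := by
    rw [Nat.cast_natAbs, Int.cast_abs, sq_abs]
  rw [hnsq]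
  simp only [Finset.mem_insert, Finset.mem_singleton, not_or] at hn
  obtain ⟨hz1, hz2⟩ := hz
  rcases Nat.lt_or_ge n.natAbs (2 * k - 1) with h | h
  · have h3 : n.natAbs + 2 ≤ 2 * k := by omega
    have h4 : (n.natAbs : ℝ) + 2 ≤ 2 * k := by exact_mod_cast h3
    have h5 : (n.natAbs : ℝ) ^ 2 ≤ (2 * (k:ℝ) - 2) ^ 2 :=
      pow_le_pow_left₀ (Nat.cast_nonneg _) (by linarith) 2
    refine le_trans ?_ (le_abs_self _)
    nlinarith
  · have h3 : 2 * k + 2 ≤ n.natAbs := by omega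
    have h4 : 2 * (k:ℝ) + 2 ≤ n.natAbs := by exact_mod_cast h3
    have h5 : (2 * (k:ℝ) + 2) ^ 2 ≤ (n.natAbs : ℝ) ^ 2 :=
      pow_le_pow_left₀ (by positivity) h4 2
    refine le_trans ?_ (neg_le_abs _)
    nlinarith

end Assembly


/-- if `A` has a real eigenvalue `μ_j` of odd algebraic multiplicity,
then for every large `k` the interval `Γ_{k,j} = (μ_j + (2k-1)², μ_j + (2k+1)²]`
contains finitely many pairwise disjoint closed subintervals lying in the real spectrum
of `L(Q)`, of total length within `c₁₁ δ_k` of the length of `Γ_{k,j}`. -/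
theorem statement16 {m : ℕ} (hm : 1 ≤ m) (Q : ℝ → Matrix (Fin m) (Fin m) ℂ)
    (hQcont : Continuous Q)
    (hQper : ∀ x : ℝ, Q (x + Real.pi) = Q x)
    (hQPT : ∀ (x : ℝ) (i j : Fin m), (starRingEnd ℂ) (Q (-x) i j) = Q x i j)
    (μj : ℝ) (hμj : ((meanMatrix Q).charpoly).IsRoot (μj : ℂ))
    (hodd : Odd (((meanMatrix Q).charpoly).rootMultiplicity (μj : ℂ))) :
    ∃ N : ℕ, 0 < N ∧ ∃ c₁₁ : ℝ, 0 < c₁₁ ∧ ∃ δ : ℕ → ℝ, (∀ k, 0 < δ k) ∧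
      Filter.Tendsto δ Filter.atTop (nhds 0) ∧
      ∀ k : ℕ, N ≤ k → ∃ l : ℕ, ∃ a b : Fin l → ℝ,
        (∀ i, a i ≤ b i) ∧
        (∀ i i', i ≠ i' → Disjoint (Set.Icc (a i) (b i)) (Set.Icc (a i') (b i'))) ∧
        (∀ i, Set.Icc (a i) (b i) ⊆ {x : ℝ | ((x : ℂ)) ∈ SpecLQ Q}) ∧
        (∀ i, Set.Icc (a i) (b i) ⊆
          Set.Ioc (μj + (2 * (k : ℝ) - 1) ^ 2) (μj + (2 * (k : ℝ) + 1) ^ 2)) ∧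
        ((μj + (2 * (k : ℝ) + 1) ^ 2) - (μj + (2 * (k : ℝ) - 1) ^ 2)) -
            (∑ i, (b i - a i)) < c₁₁ * δ k := by
  obtain ⟨B, hB⟩ := meanMatrix_real hQper hQPT
  have hoddB := odd_real hB hodd
  set R := B.charpoly.roots.toFinset with hR
  set c : ℝ := 6 * R.card + 1 with hc
  have hcpos : 0 < c := by positivity
  have hmono : ∀ (k : ℕ) (e e' : ℝ), e ≤ e' →
      (∃ l : ℕ, ∃ a b : Fin l → ℝ,
        (∀ i, a i ≤ b i) ∧
        (∀ i i', i ≠ i' → Disjoint (Set.Icc (a i) (b i)) (Set.Icc (a i') (b i'))) ∧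
        (∀ i, Set.Icc (a i) (b i) ⊆ {x : ℝ | ((x : ℂ)) ∈ SpecLQ Q}) ∧
        (∀ i, Set.Icc (a i) (b i) ⊆
          Set.Ioc (μj + (2 * (k : ℝ) - 1) ^ 2) (μj + (2 * (k : ℝ) + 1) ^ 2)) ∧
        ((μj + (2 * (k : ℝ) + 1) ^ 2) - (μj + (2 * (k : ℝ) - 1) ^ 2)) -
            (∑ i, (b i - a i)) ≤ c * e) →
      (∃ l : ℕ, ∃ a b : Fin l → ℝ,
        (∀ i, a i ≤ b i) ∧
        (∀ i i', i ≠ i' → Disjoint (Set.Icc (a i) (b i)) (Set.Icc (a i') (b i'))) ∧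
        (∀ i, Set.Icc (a i) (b i) ⊆ {x : ℝ | ((x : ℂ)) ∈ SpecLQ Q}) ∧
        (∀ i, Set.Icc (a i) (b i) ⊆
          Set.Ioc (μj + (2 * (k : ℝ) - 1) ^ 2) (μj + (2 * (k : ℝ) + 1) ^ 2)) ∧
        ((μj + (2 * (k : ℝ) + 1) ^ 2) - (μj + (2 * (k : ℝ) - 1) ^ 2)) -
            (∑ i, (b i - a i)) ≤ c * e') := by
    rintro k e e' hee ⟨l, a, b, h1, h2, h3, h4, h5⟩
    exact ⟨l, a, b, h1, h2, h3, h4, h5.trans (mul_le_mul_of_nonneg_left hee hcpos.le)⟩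
  obtain ⟨N, hN, δ, hδ, hδ0, hgood⟩ := exists_delta hmono (by
    intro ε hε
    obtain ⟨Λ, hΛ⟩ := core hQcont hQper hQPT hB hoddB hε
    obtain ⟨C, hC0, hC⟩ : ∃ C : ℝ, 0 ≤ C ∧ ∀ μ ∈ R, |(μj + μ) / (2 * Real.pi)| ≤ C :=
      ⟨∑ μ ∈ R, |(μj + μ) / (2 * Real.pi)|, Finset.sum_nonneg fun _ _ => abs_nonneg _,
        fun μ hμ => Finset.single_le_sum (f := fun μ => |(μj + μ) / (2 * Real.pi)|)
          (fun _ _ => abs_nonneg _) hμ⟩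
    obtain ⟨K, hK⟩ := exists_nat_ge (|μj| + C + ε + 3 + |Λ|)
    refine ⟨K, fun k hk => ?_⟩
    have hk' : |μj| + C + ε + 3 + |Λ| ≤ k := hK.trans (by exact_mod_cast hk)
    have hΛ0 := abs_nonneg Λ
    have hμ0 := abs_nonneg μj
    set P : Finset ℝ := (({2 * k - 1, 2 * k, 2 * k + 1} : Finset ℕ) ×ˢ R).image
      (fun x => (x.1 : ℝ) ^ 2 + (μj + x.2) / (2 * Real.pi)) with hP
    have hPc : P.card ≤ 3 * R.card := by
      refine Finset.card_image_le.trans ?_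
      rw [Finset.card_product]
      exact Nat.mul_le_mul_right _ Finset.card_le_three
    obtain ⟨F, h1, h2, h3, h4, h5⟩ := intervals hε P (μj + (2 * (k:ℝ) - 1) ^ 2 + ε)
      (μj + (2 * (k:ℝ) + 1) ^ 2)
    have e := F.equivFin.symm
    refine ⟨F.card, fun i => (e i).1.1, fun i => (e i).1.2, fun i => h1 _ (e i).2, ?_, ?_, ?_, ?_⟩
    · intro i i' hne
      exact h2 _ (e i).2 _ (e i').2 fun h => hne (e.injective (Subtype.ext h))
    · intro i z hz
      have hz' := h3 _ (e i).2 hz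
      refine hΛ z ?_ ?_
      · have := le_abs_self Λ
        have := neg_abs_le μj
        have h6 := hz'.1
        nlinarith
      · intro n μ hμ
        have hμR : μ ∈ R := Multiset.mem_toFinset.2 hμ
        by_cases hn : n.natAbs ∈ ({2 * k - 1, 2 * k, 2 * k + 1} : Finset ℕ)
        · have hmem : (n.natAbs : ℝ) ^ 2 + (μj + μ) / (2 * Real.pi) ∈ P :=
            Finset.mem_image.2 ⟨(n.natAbs, μ), Finset.mem_product.2 ⟨hn, hμR⟩, rfl⟩
          have := h4 _ (e i).2 z hz _ hmem
          have hnsq : (n:ℝ) ^ 2 = (n.natAbs : ℝ) ^ 2 := by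
            rw [Nat.cast_natAbs, Int.cast_abs, sq_abs]
          rw [hnsq, sub_sub]
          exact this
        · exact far_points (by linarith) hε hC0 hz' hn (hC μ hμR)
    · intro i z hz
      have hz' := h3 _ (e i).2 hz
      exact ⟨by linarith [hz'.1], hz'.2⟩
    · have hsum : ∑ i, ((e i).1.2 - (e i).1.1) = ∑ x ∈ F, (x.2 - x.1) := by
        rw [← Finset.sum_coe_sort F]
        exact e.sum_comp (fun x : F => x.1.2 - x.1.1)
      rw [hsum]
      have hPc' : (P.card : ℝ) ≤ 3 * R.card := by exact_mod_cast hPc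
      have : 2 * ε * P.card ≤ 2 * ε * (3 * R.card) :=
        mul_le_mul_of_nonneg_left hPc' (by positivity)
      rw [hc]
      nlinarith)
  refine ⟨N, hN, c + 1, by positivity, δ, hδ, hδ0, fun k hk => ?_⟩
  obtain ⟨l, a, b, h1, h2, h3, h4, h5⟩ := hgood k hk
  exact ⟨l, a, b, h1, h2, h3, h4, by have := hδ k; nlinarith⟩
end
end
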